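/- arXiv:2107.11846 — 2 statements merged into one kernel-verified Lean document; each statement's English description precedes it below -/
import Mathlib

section
/- As t → ∞, the scaled random variables (E[R^γ]·t)^{−1/γ}·Y_t converge in distribution to a random variable S whose characteristic function is E[e^{iθS}] = exp( Q ∫_0^∞ (e^{iθu} − 1 − iθu) u^{−γ−1} du ) for all θ ∈ ℝ, i.e. a centered strictly γ-stable random variable with positive spectrum. -/
open MeasureTheory Filter Set
open scoped ENNReal NNReal Topology

noncomputable section

/-- `ℓ_t(s,u)`: the length of the interval `[s,s+u] ∩ [0,t]`. -/
def ellK (t s u : ℝ) : ℝ := max 0 (min (s + u) t - max s 0)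

/-- The intensity measure `u^{-γ-1} du` on `(0,∞)`. -/
def muU (γ : ℝ) : Measure ℝ :=
  (volume.restrict (Set.Ioi 0)).withDensity fun u => ENNReal.ofReal (u ^ (-γ - 1))

/-- The measure `μ^ℓ_t` on `(0,∞)`:
`μ^ℓ_t(A) = ∫_ℝ ∫_0^∞ 1{ℓ_t(s,u) ∈ A} u^{-γ-1} du ds`. -/
def muEll (γ t : ℝ) : Measure ℝ :=
  (Measure.map (fun p : ℝ × ℝ => ellK t p.1 p.2)
    ((volume : Measure ℝ).prod (muU γ))).restrict (Set.Ioi 0)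

/-- The measure `μ^{ℓ,r}_t` on `(0,∞)`:
`μ^{ℓ,r}_t(A) = ∫_{(0,∞)} ∫_{(0,∞)} 1{rℓ ∈ A} μ^ℓ_t(dℓ) F_R(dr)`. -/
def muEllR (γ t : ℝ) (FR : Measure ℝ) : Measure ℝ :=
  (Measure.map (fun p : ℝ × ℝ => p.1 * p.2) (FR.prod (muEll γ t))).restrict (Set.Ioi 0)

/-- The measure `ν` on `[0,1]`: density `s^{-(γ+1)} + ((2-γ)/γ)·s^{-γ}` on `(0,1)` with
respect to Lebesgue measure, together with an atom of mass `1/(γ(γ-1))` at the point `1`. -/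
def nuM (γ : ℝ) : Measure ℝ :=
  (volume.restrict (Set.Ioo 0 1)).withDensity
      (fun s => ENNReal.ofReal (s ^ (-(γ + 1)) + (2 - γ) / γ * s ^ (-γ)))
    + (Real.toNNReal (1 / (γ * (γ - 1)))) • Measure.dirac 1

instance nuM.sigmaFinite (γ : ℝ) : SigmaFinite (nuM γ) := by
  unfold nuM; infer_instance

end


noncomputable def psiK (x : ℝ) : ℂ := Complex.exp (x * Complex.I) - 1 - x * Complex.I

lemma psiK_zero : psiK 0 = 0 := by simp [psiK]

lemma psiK_cont : Continuous psiK := by unfold psiK; fun_prop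

lemma psiK_le1 (x : ℝ) : ‖psiK x‖ ≤ 2 * |x| := by
  have h1 : ‖Complex.exp (x * Complex.I) - 1‖ ≤ |x| := by
    have := Real.norm_exp_I_mul_ofReal_sub_one_le (x := x)
    rw [mul_comm]; simpa using this
  have h2 : ‖(x : ℂ) * Complex.I‖ = |x| := by simp
  unfold psiK
  calc _ ≤ _ := norm_sub_le _ _
    _ ≤ _ := by rw [h2]; linarith

lemma psiK_le2 (x : ℝ) : ‖psiK x‖ ≤ 2 * |x| ^ 2 := by
  rcases le_total |x| 1 with h | h
  · have h2 : ‖(x : ℂ) * Complex.I‖ = |x| := by simp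
    have := Complex.norm_exp_sub_one_sub_id_le (x := (x : ℂ) * Complex.I) (by rw [h2]; exact h)
    rw [h2] at this
    unfold psiK
    nlinarith [sq_nonneg |x|]
  · have := psiK_le1 x
    nlinarith

lemma psiK_mul_le (θ l : ℝ) (hl : 0 ≤ l) :
    ‖psiK (θ * l)‖ ≤ (2 * (|θ| + θ ^ 2)) * min l (l ^ 2) := by
  have h1 := psiK_le1 (θ * l)
  have h2 := psiK_le2 (θ * l)
  rw [abs_mul, abs_of_nonneg hl] at h1 h2
  rw [mul_pow, sq_abs] at h2
  have := abs_nonneg θ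
  rcases min_cases l (l ^ 2) with ⟨h, _⟩ | ⟨h, _⟩ <;> rw [h]
  · nlinarith [mul_nonneg (sq_nonneg θ) hl]
  · nlinarith [mul_nonneg this (sq_nonneg l)]

lemma min_le_rpow (w q : ℝ) (hw : 0 ≤ w) (h1 : 1 ≤ q) (h2 : q ≤ 2) :
    min w (w ^ 2) ≤ w ^ q := by
  rcases le_total w 1 with h | h
  · calc min w (w^2) ≤ w ^ 2 := min_le_right _ _
      _ = w ^ (2 : ℝ) := by norm_cast
      _ ≤ _ := Real.rpow_le_rpow_of_exponent_ge' hw h (by linarith) h2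
  · calc min w (w^2) ≤ w := min_le_left _ _
      _ = w ^ (1 : ℝ) := by simp
      _ ≤ _ := Real.rpow_le_rpow_of_exponent_le h h1

lemma ellK_nonneg (t s u : ℝ) : 0 ≤ ellK t s u := le_max_left _ _

lemma ellK_le (a σ v : ℝ) (ha : 0 < a) (hv : 0 < v) :
    ellK a (a * σ) v ≤ 2 * (v / (1 + |σ|)) := by
  have hs : 0 < 1 + |σ| := by positivity
  rw [mul_div_assoc', le_div_iff₀ hs]
  unfold ellK
  rcases le_total (min (a * σ + v) a - max (a * σ) 0) 0 with h | h
  · rw [max_eq_left h]; linarith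
  · rw [max_eq_right h]
    have e1 := min_le_left (a * σ + v) a
    have e2 := min_le_right (a * σ + v) a
    have e3 := le_max_left (a * σ) 0
    have e4 := le_max_right (a * σ) 0
    set X := min (a * σ + v) a - max (a * σ) 0
    rcases le_total 0 σ with h0 | h0
    · rw [abs_of_nonneg h0]
      have hX : X ≤ v := by linarith
      have : σ ≤ 1 := by
        by_contra hc
        push Not at hc
        nlinarith
      nlinarith
    · rw [abs_of_nonpos h0]
      have h5 : X ≤ a * σ + v := by linarith
      have h6 : X ≤ a := by linarith
      nlinarith

lemma psi_bound (θ p a σ v : ℝ) (hp1 : 1 ≤ p) (hp2 : p ≤ 2) (ha : 0 < a) (hv : 0 < v) :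
    ‖psiK (θ * ellK a (a * σ) v)‖ ≤
      (8 * (|θ| + θ ^ 2)) * ((1 + ‖σ‖) ^ (-p) * min (v ^ p) (v ^ 2)) := by
  have h0 := ellK_nonneg a (a * σ) v
  have h1 := psiK_mul_le θ _ h0
  have h2 := ellK_le a σ v ha hv
  have hs : 1 ≤ 1 + |σ| := by linarith [abs_nonneg σ]
  have hA : 0 ≤ 2 * (|θ| + θ ^ 2) := by positivity
  have key : ∀ q : ℝ, p ≤ q → q ≤ 2 → min (ellK a (a * σ) v) (ellK a (a * σ) v ^ 2) ≤
      4 * ((1 + |σ|) ^ (-p) * v ^ q) := by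
    intro q hq hq2
    calc _ ≤ (ellK a (a * σ) v) ^ q := min_le_rpow _ _ h0 (by linarith) hq2
      _ ≤ (2 * (v / (1 + |σ|))) ^ q := Real.rpow_le_rpow h0 h2 (by linarith)
      _ = 2 ^ q * ((1 + |σ|) ^ (-q) * v ^ q) := by
        rw [Real.mul_rpow (by norm_num) (by positivity),
          Real.div_rpow hv.le (by positivity), Real.rpow_neg (by positivity)]
        ring
      _ ≤ _ := by
        have : (2 : ℝ) ^ q ≤ 4 := by
          calc (2 : ℝ) ^ q ≤ 2 ^ (2 : ℝ) := Real.rpow_le_rpow_of_exponent_le (by norm_num) hq2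
            _ = 4 := by norm_num
        gcongr
  have k1 := key p le_rfl hp2
  have k2 := key 2 hp2 le_rfl
  rw [Real.rpow_two] at k2
  rw [Real.norm_eq_abs]
  have k3 : min (ellK a (a * σ) v) (ellK a (a * σ) v ^ 2) ≤
      4 * ((1 + |σ|) ^ (-p) * min (v ^ p) (v ^ 2)) := by
    rcases min_choice (v ^ p) (v ^ 2) with h | h <;> rw [h] <;> assumption
  calc _ ≤ _ := h1
    _ ≤ _ := mul_le_mul_of_nonneg_left k3 hA
    _ = _ := by ring

lemma ellK_lim (σ v : ℝ) (hv : 0 < v) (h0 : σ ≠ 0) (h1 : σ ≠ 1) :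
    ∀ᶠ a : ℝ in atTop, ellK a (a * σ) v = (Ioo (0:ℝ) 1).indicator (fun _ => v) σ := by
  rcases lt_or_gt_of_ne h0 with h | h
  · filter_upwards [eventually_ge_atTop (v / (-σ)), eventually_gt_atTop 0] with a ha ha0
    rw [indicator_of_notMem (by simp [h.le])]
    rw [div_le_iff₀ (by linarith)] at ha
    unfold ellK
    apply max_eq_left
    have := min_le_left (a * σ + v) a
    have := le_max_right (a * σ) 0
    linarith
  · rcases lt_or_gt_of_ne h1 with h' | h'
    · filter_upwards [eventually_ge_atTop (v / (1 - σ)), eventually_gt_atTop 0] with a ha ha0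
      rw [indicator_of_mem (by simp [h, h'])]
      rw [div_le_iff₀ (by linarith)] at ha
      unfold ellK
      rw [min_eq_left (by linarith), max_eq_left (a := a * σ) (by positivity), max_eq_right] <;> linarith
    · filter_upwards [eventually_gt_atTop 0] with a ha0
      rw [indicator_of_notMem (by simp [h'.le])]
      unfold ellK
      apply max_eq_left
      have := min_le_right (a * σ + v) a
      have := le_max_left (a * σ) 0
      nlinarith

lemma ellK_scale (k t s u : ℝ) (hk : 0 < k) : k * ellK t s u = ellK (k * t) (k * s) (k * u) := by
  unfold ellK
  rw [mul_max_of_nonneg _ _ hk.le, mul_sub, mul_min_of_nonneg _ _ hk.le,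
    mul_max_of_nonneg _ _ hk.le, mul_add]
  simp

lemma ellK_meas : Measurable (fun q : ℝ × ℝ × ℝ => ellK q.1 q.2.1 q.2.2) := by
  unfold ellK; fun_prop

lemma ellK_meas2 (t : ℝ) : Measurable (fun q : ℝ × ℝ => ellK t q.1 q.2) := by
  unfold ellK; fun_prop

instance muU_sigmaFinite (γ : ℝ) : SigmaFinite (muU γ) := by
  unfold muU; infer_instance

lemma muU_ae (γ : ℝ) : ∀ᵐ v ∂muU γ, 0 < v := by
  unfold muU
  exact (withDensity_absolutelyContinuous _ _).ae_le (ae_restrict_mem measurableSet_Ioi)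

lemma integrable_muU (γ : ℝ) (f : ℝ → ℝ) :
    Integrable f (muU γ) ↔ IntegrableOn (fun u => u ^ (-γ - 1) * f u) (Ioi 0) := by
  unfold muU
  have : (fun u : ℝ => ENNReal.ofReal (u ^ (-γ - 1))) =
    fun u => ((Real.toNNReal (u ^ (-γ-1)) : ℝ≥0) : ℝ≥0∞) := rfl
  rw [this, integrable_withDensity_iff_integrable_smul (by fun_prop), IntegrableOn]
  apply integrable_congr
  filter_upwards [ae_restrict_mem measurableSet_Ioi] with u hu
  rw [NNReal.smul_def, Real.coe_toNNReal _ (Real.rpow_nonneg (le_of_lt hu) _), smul_eq_mul]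

lemma integral_muU (γ : ℝ) (f : ℝ → ℂ) :
    ∫ u, f u ∂(muU γ) = ∫ u in Ioi (0:ℝ), f u * ((u ^ (-γ - 1) : ℝ) : ℂ) := by
  unfold muU
  have : (fun u : ℝ => ENNReal.ofReal (u ^ (-γ - 1))) =
    fun u => ((Real.toNNReal (u ^ (-γ-1)) : ℝ≥0) : ℝ≥0∞) := rfl
  rw [this, integral_withDensity_eq_integral_smul (by fun_prop)]
  apply setIntegral_congr_fun measurableSet_Ioi
  intro u hu
  simp only
  rw [NNReal.smul_def, Real.coe_toNNReal _ (Real.rpow_nonneg (le_of_lt hu) _), Complex.real_smul,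
    mul_comm]

lemma integrable_k (γ p : ℝ) (hp2 : p < γ) (hγ : γ < 2) :
    Integrable (fun v => min (v ^ p) (v ^ 2)) (muU γ) := by
  rw [integrable_muU, ← Ioc_union_Ioi_eq_Ioi (zero_le_one (α := ℝ))]
  apply IntegrableOn.union
  · have h : IntegrableOn (fun v : ℝ => v ^ (1 - γ)) (Ioc 0 1) := by
      rw [← intervalIntegrable_iff_integrableOn_Ioc_of_le zero_le_one]
      exact intervalIntegral.intervalIntegrable_rpow' (by linarith)
    refine Integrable.mono' h (by fun_prop) ?_
    filter_upwards [ae_restrict_mem measurableSet_Ioc] with v hv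
    have hv0 := hv.1
    rw [Real.norm_of_nonneg (by positivity)]
    calc _ ≤ v ^ (-γ - 1) * v ^ 2 := by gcongr; exact min_le_right _ _
      _ = _ := by rw [← Real.rpow_two, ← Real.rpow_add hv0]; ring_nf
  · have h : IntegrableOn (fun v : ℝ => v ^ (p - γ - 1)) (Ioi 1) :=
      integrableOn_Ioi_rpow_of_lt (by linarith) one_pos
    refine Integrable.mono' h (by fun_prop) ?_
    filter_upwards [ae_restrict_mem measurableSet_Ioi] with v hv
    have hv0 : 0 < v := lt_trans one_pos hv
    rw [Real.norm_of_nonneg (by positivity)]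
    calc _ ≤ v ^ (-γ - 1) * v ^ p := by gcongr; exact min_le_left _ _
      _ = _ := by rw [← Real.rpow_add hv0]; ring_nf

lemma muU_scale (γ b : ℝ) (hb : 0 < b) :
    Measure.map (fun v => b * v) (muU γ) = ENNReal.ofReal (b ^ γ) • muU γ := by
  have hd : Measurable (fun u : ℝ => ENNReal.ofReal (u ^ (-γ - 1))) := by fun_prop
  refine Measure.ext_of_lintegral _ fun f hf => ?_
  rw [lintegral_map hf (by fun_prop), lintegral_smul_measure]
  unfold muU
  rw [lintegral_withDensity_eq_lintegral_mul _ hd (by fun_prop),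
    lintegral_withDensity_eq_lintegral_mul _ hd hf,
    ← lintegral_indicator measurableSet_Ioi, ← lintegral_indicator measurableSet_Ioi]
  have hG : Measurable ((Ioi (0:ℝ)).indicator
    ((fun u : ℝ => ENNReal.ofReal (u ^ (-γ - 1))) * f)) := (hd.mul hf).indicator measurableSet_Ioi
  have h1 : ∀ G : ℝ → ℝ≥0∞, Measurable G →
      ∫⁻ v, G (b * v) = ENNReal.ofReal b⁻¹ * ∫⁻ v, G v := by
    intro G hG
    rw [← lintegral_map hG (by fun_prop : Measurable (fun v : ℝ => b * v)),
      Real.map_volume_mul_left hb.ne', lintegral_smul_measure, abs_of_pos (by positivity)]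
    rfl
  have h2 : ∀ v : ℝ, (Ioi (0:ℝ)).indicator
      ((fun u : ℝ => ENNReal.ofReal (u ^ (-γ - 1))) * fun a => f (b * a)) v =
      ENNReal.ofReal (b ^ (γ + 1)) * (Ioi (0:ℝ)).indicator
      ((fun u : ℝ => ENNReal.ofReal (u ^ (-γ - 1))) * f) (b * v) := by
    intro v
    by_cases hv : 0 < v
    · rw [indicator_of_mem (mem_Ioi.2 hv), indicator_of_mem (mem_Ioi.2 (mul_pos hb hv))]
      simp only [Pi.mul_apply]
      rw [← mul_assoc, ← ENNReal.ofReal_mul (by positivity), Real.mul_rpow hb.le hv.le,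
        ← mul_assoc, ← Real.rpow_add hb]
      simp
    · rw [indicator_of_notMem (by simpa using hv), indicator_of_notMem, mul_zero]
      simp only [mem_Ioi, not_lt] at *
      nlinarith
  simp_rw [h2]
  rw [lintegral_const_mul _ (by fun_prop), h1 _ hG, ← mul_assoc, ← ENNReal.ofReal_mul (by positivity),
    Real.rpow_add hb, Real.rpow_one, mul_assoc, mul_inv_cancel₀ hb.ne', mul_one]
  rfl

lemma nu_scale (γ t b : ℝ) (ht : 0 < t) (hb : 0 < b) :
    Measure.map (fun p : ℝ × ℝ => (t * p.1, b * p.2)) ((volume : Measure ℝ).prod (muU γ)) =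
      ENNReal.ofReal (b ^ γ / t) • ((volume : Measure ℝ).prod (muU γ)) := by
  have := Measure.map_prod_map (f := fun x : ℝ => t * x) (g := fun x : ℝ => b * x)
    (volume : Measure ℝ) (muU γ) (by fun_prop) (by fun_prop)
  change Measure.map (Prod.map _ _) _ = _
  rw [← this, muU_scale γ b hb, Real.map_volume_mul_left ht.ne', abs_of_pos (by positivity)]
  rw [Measure.prod_smul_left, Measure.prod_smul_right, smul_smul,
    ← ENNReal.ofReal_mul (by positivity)]
  congr 2
  field_simp

lemma prod_scale (γ m t κ : ℝ) (hm : 0 < m) (ht : 0 < t) (hκ : 0 < κ)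
    (hκm : κ ^ γ = (m * t)⁻¹)
    (FR : Measure ℝ) [IsProbabilityMeasure FR] (hpos : ∀ᵐ r ∂FR, 0 < r) :
    Measure.map (fun q : ℝ × ℝ × ℝ => (q.1, (t * q.2.1, (κ * q.1)⁻¹ * q.2.2)))
      ((FR.withDensity (fun r => ENNReal.ofReal (r ^ γ / m))).prod
        ((volume : Measure ℝ).prod (muU γ))) = FR.prod ((volume : Measure ℝ).prod (muU γ)) := by
  refine Measure.ext_of_lintegral _ fun f hf => ?_
  have hT : Measurable (fun q : ℝ × ℝ × ℝ => (q.1, (t * q.2.1, (κ * q.1)⁻¹ * q.2.2))) := by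
    fun_prop
  have hF : Measurable (fun q : ℝ × ℝ × ℝ => f (q.1, (t * q.2.1, (κ * q.1)⁻¹ * q.2.2))) :=
    hf.comp hT
  rw [lintegral_map hf hT, lintegral_prod _ hF.aemeasurable, lintegral_prod _ hf.aemeasurable,
    lintegral_withDensity_eq_lintegral_mul _ (by fun_prop) hF.lintegral_prod_right']
  apply lintegral_congr_ae
  filter_upwards [hpos] with r hr
  simp only [Pi.mul_apply]
  have h1 := nu_scale γ t (κ * r)⁻¹ ht (by positivity)
  have h2 : ∫⁻ y, f (r, (t * y.1, (κ * r)⁻¹ * y.2)) ∂((volume : Measure ℝ).prod (muU γ)) =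
      ENNReal.ofReal (((κ * r)⁻¹) ^ γ / t) *
        ∫⁻ y, f (r, y) ∂((volume : Measure ℝ).prod (muU γ)) := by
    have h3 : Measurable (fun y : ℝ × ℝ => f (r, y)) := by fun_prop
    have h4 := lintegral_map (μ := (volume : Measure ℝ).prod (muU γ)) h3
      (by fun_prop : Measurable (fun p : ℝ × ℝ => (t * p.1, (κ * r)⁻¹ * p.2)))
    rw [h1, lintegral_smul_measure] at h4
    rw [← h4]; rfl
  rw [h2, ← mul_assoc, ← ENNReal.ofReal_mul (by positivity)]
  have : r ^ γ / m * ((κ * r)⁻¹ ^ γ / t) = 1 := by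
    rw [Real.inv_rpow (by positivity), Real.mul_rpow hκ.le hr.le, hκm]
    have : 0 < r ^ γ := by positivity
    field_simp
  rw [this]; simp

instance muEll_sfinite (γ t : ℝ) : SFinite (muEll γ t) := by
  unfold muEll; infer_instance

lemma integral_muEllR (γ t : ℝ) (FR : Measure ℝ) [IsProbabilityMeasure FR]
    (hpos : ∀ᵐ r ∂FR, 0 < r) (g : ℝ → ℂ) (hg : Measurable g) (hg0 : g 0 = 0) :
    ∫ v, g v ∂(muEllR γ t FR) =
      ∫ q, g (q.1 * ellK t q.2.1 q.2.2) ∂(FR.prod ((volume : Measure ℝ).prod (muU γ))) := by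
  have hm := ellK_meas2 t
  have e1 : FR.prod (muEll γ t) = (Measure.map (fun q : ℝ × ℝ × ℝ => (q.1, ellK t q.2.1 q.2.2))
      (FR.prod ((volume : Measure ℝ).prod (muU γ)))).restrict (univ ×ˢ Ioi 0) := by
    have := Measure.map_prod_map (f := (id : ℝ → ℝ)) (g := fun p : ℝ × ℝ => ellK t p.1 p.2)
      FR ((volume : Measure ℝ).prod (muU γ)) measurable_id hm
    change _ = (Measure.map (Prod.map (id : ℝ → ℝ) (fun p : ℝ × ℝ => ellK t p.1 p.2))
      (FR.prod ((volume : Measure ℝ).prod (muU γ)))).restrict (univ ×ˢ Ioi 0)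
    rw [← this, ← Measure.prod_restrict, Measure.map_id, Measure.restrict_univ]
    rfl
  unfold muEllR
  have hg' : Measurable ((Ioi (0:ℝ)).indicator g) := hg.indicator measurableSet_Ioi
  have hT : Measurable (fun q : ℝ × ℝ × ℝ => (q.1, ellK t q.2.1 q.2.2)) :=
    measurable_fst.prodMk (hm.comp measurable_snd)
  rw [← integral_indicator measurableSet_Ioi, integral_map (by fun_prop) hg'.aestronglyMeasurable,
    e1, ← integral_indicator (MeasurableSet.univ.prod measurableSet_Ioi),
    integral_map hT.aemeasurable]
  · apply integral_congr_ae
    have := Measure.quasiMeasurePreserving_fst (μ := FR)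
      (ν := (volume : Measure ℝ).prod (muU γ)) |>.ae hpos
    filter_upwards [this] with q hq
    rcases (ellK_nonneg t q.2.1 q.2.2).eq_or_lt with h | h
    · rw [← h]; simp [hg0]
    · rw [indicator_of_mem (by simpa using h), indicator_of_mem (mem_Ioi.2 (mul_pos hq h))]
  · have h5 : Measurable (fun p : ℝ × ℝ => (Ioi (0:ℝ)).indicator g (p.1 * p.2)) :=
      hg'.comp (by fun_prop : Measurable (fun p : ℝ × ℝ => p.1 * p.2))
    have h6 : MeasurableSet ((univ : Set ℝ) ×ˢ (Ioi (0:ℝ))) :=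
      MeasurableSet.univ.prod measurableSet_Ioi
    exact (h5.indicator h6).aestronglyMeasurable

lemma integrable_dom (γ p θ : ℝ) (hp1 : 1 < p) (hp2 : p < γ) (hγ : γ < 2)
    (FR : Measure ℝ) [IsProbabilityMeasure FR] :
    Integrable (fun q : ℝ × ℝ × ℝ => (8 * (|θ| + θ ^ 2)) *
      ((1 + ‖q.2.1‖) ^ (-p) * min (q.2.2 ^ p) (q.2.2 ^ 2)))
      (FR.prod ((volume : Measure ℝ).prod (muU γ))) := by
  apply Integrable.const_mul
  have h1 : Integrable (fun x : ℝ => (1 + ‖x‖) ^ (-p)) :=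
    integrable_one_add_norm (by simpa using hp1)
  exact (h1.mul_prod (integrable_k γ p hp2 hγ)).comp_snd FR

lemma tendsto_exponent (γ : ℝ) (hγ1 : 1 < γ) (hγ2 : γ < 2)
    (FR : Measure ℝ) [IsProbabilityMeasure FR] (hFRpos : FR (Set.Iic 0) = 0)
    (hmom : Integrable (fun r => r ^ γ) FR) (θ : ℝ) :
    Tendsto (fun t => ∫ v, psiK (θ * (((∫ r, r ^ γ ∂FR) * t) ^ (-1 / γ)) * v) ∂(muEllR γ t FR))
      atTop (𝓝 (∫ v, psiK (θ * v) ∂(muU γ))) := by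
  have hpos : ∀ᵐ r ∂FR, 0 < r := by
    rw [ae_iff]; convert hFRpos using 2; ext; simp
  set m := ∫ r, r ^ γ ∂FR with hmdef
  have hm : 0 < m := by
    rw [hmdef, integral_pos_iff_support_of_nonneg_ae _ hmom]
    · have : FR (Function.support fun r : ℝ => r ^ γ) = 1 := by
        rw [prob_compl_eq_zero_iff₀ ?_ |>.symm]
        · rw [← mem_ae_iff]
          filter_upwards [hpos] with r hr
          exact (Real.rpow_pos_of_pos hr γ).ne'
        · exact (measurableSet_support (by fun_prop)).nullMeasurableSet
      rw [this]; exact one_pos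
    · filter_upwards [hpos] with r hr
      exact (Real.rpow_pos_of_pos hr γ).le
  set FR' := FR.withDensity (fun r => ENNReal.ofReal (r ^ γ / m)) with hFR'
  have : IsProbabilityMeasure FR' := by
    constructor
    rw [hFR', withDensity_apply _ MeasurableSet.univ, Measure.restrict_univ,
      ← ofReal_integral_eq_lintegral_ofReal (hmom.div_const m), integral_div, ← hmdef,
      div_self hm.ne', ENNReal.ofReal_one]
    filter_upwards [hpos] with r hr
    exact (div_pos (Real.rpow_pos_of_pos hr γ) hm).le
  have hpos' : ∀ᵐ r ∂FR', 0 < r := (withDensity_absolutelyContinuous _ _).ae_le hpos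
  set N := FR'.prod ((volume : Measure ℝ).prod (muU γ)) with hN
  have hNr : ∀ᵐ q ∂N, 0 < q.1 :=
    Measure.quasiMeasurePreserving_fst (μ := FR')
      (ν := (volume : Measure ℝ).prod (muU γ)) |>.ae hpos'
  have hNv : ∀ᵐ q ∂N, 0 < q.2.2 :=
    Measure.quasiMeasurePreserving_snd (μ := FR') (ν := (volume : Measure ℝ).prod (muU γ)) |>.ae
      (Measure.quasiMeasurePreserving_snd (μ := (volume : Measure ℝ)) (ν := muU γ) |>.ae (muU_ae γ))
  have hNs : ∀ᵐ q ∂N, q.2.1 ≠ 0 ∧ q.2.1 ≠ 1 := by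
    have : ∀ᵐ s : ℝ, s ≠ 0 ∧ s ≠ 1 := (Measure.ae_ne volume 0).and (Measure.ae_ne volume 1)
    exact Measure.quasiMeasurePreserving_snd (μ := FR')
      (ν := (volume : Measure ℝ).prod (muU γ)) |>.ae
      (Measure.quasiMeasurePreserving_fst (μ := (volume : Measure ℝ)) (ν := muU γ) |>.ae this)
  have step1 : ∀ t : ℝ, 0 < t → ∫ v, psiK (θ * ((m * t) ^ (-1 / γ)) * v) ∂(muEllR γ t FR) =
      ∫ q, psiK (θ * ellK ((m * t) ^ (-1 / γ) * q.1 * t) ((m * t) ^ (-1 / γ) * q.1 * t * q.2.1)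
        q.2.2) ∂N := by
    intro t ht
    set κ := (m * t) ^ (-1 / γ) with hκ
    have hκ0 : 0 < κ := by positivity
    have hκm : κ ^ γ = (m * t)⁻¹ := by
      rw [hκ, ← Real.rpow_mul (by positivity), div_mul_cancel₀ _ (by linarith : γ ≠ 0),
        Real.rpow_neg_one]
    rw [integral_muEllR γ t FR hpos (fun v => psiK (θ * κ * v))
      (psiK_cont.measurable.comp (by fun_prop)) (by simp [psiK_zero]),
      ← prod_scale γ m t κ hm ht hκ0 hκm FR hpos, integral_map (by fun_prop)]
    · apply integral_congr_ae
      filter_upwards [hNr] with q hq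
      have h := ellK_scale (κ * q.1) t (t * q.2.1) ((κ * q.1)⁻¹ * q.2.2) (by positivity)
      rw [mul_inv_cancel_left₀ (by positivity)] at h
      rw [mul_assoc (κ * q.1) t, ← h]
      congr 1
      ring
    · refine (psiK_cont.measurable.comp ?_).aestronglyMeasurable
      exact measurable_const.mul (measurable_fst.mul ((ellK_meas2 t).comp measurable_snd))
  have step2 : ∫ v, psiK (θ * v) ∂(muU γ) =
      ∫ q : ℝ × ℝ × ℝ, psiK (θ * (Ioo (0:ℝ) 1).indicator (fun _ => q.2.2) q.2.1) ∂N := by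
    have e : ∀ q : ℝ × ℝ × ℝ, psiK (θ * (Ioo (0:ℝ) 1).indicator (fun _ => q.2.2) q.2.1) =
        (fun y : ℝ × ℝ => (Ioo (0:ℝ) 1).indicator (fun _ => (1:ℂ)) y.1 * psiK (θ * y.2)) q.2 := by
      intro q
      by_cases h : q.2.1 ∈ Ioo (0:ℝ) 1
      · simp only [indicator_of_mem h, one_mul]
      · simp only [indicator_of_notMem h, mul_zero, zero_mul, psiK_zero]
    simp_rw [e]
    rw [hN, integral_fun_snd (fun y : ℝ × ℝ =>
      (Ioo (0:ℝ) 1).indicator (fun _ => (1:ℂ)) y.1 * psiK (θ * y.2)),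
      integral_prod_mul (fun x : ℝ => (Ioo (0:ℝ) 1).indicator (fun _ => (1:ℂ)) x)
        (fun v => psiK (θ * v)), integral_indicator measurableSet_Ioo]
    simp
  rw [step2]
  have hp1 : 1 < (1 + γ) / 2 := by linarith
  have hp2 : (1 + γ) / 2 < γ := by linarith
  refine Tendsto.congr' (f₁ := fun t => ∫ q, psiK (θ * ellK ((m * t) ^ (-1 / γ) * q.1 * t)
    ((m * t) ^ (-1 / γ) * q.1 * t * q.2.1) q.2.2) ∂N) ?_ ?_
  · filter_upwards [eventually_gt_atTop 0] with t ht using (step1 t ht).symm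
  refine tendsto_integral_filter_of_dominated_convergence _ ?_ ?_
    (integrable_dom γ ((1 + γ) / 2) θ hp1 hp2 hγ2 FR') ?_
  · refine Eventually.of_forall fun t => ?_
    refine (psiK_cont.measurable.comp (measurable_const.mul ?_)).aestronglyMeasurable
    exact ellK_meas.comp (f := fun q : ℝ × ℝ × ℝ => ((m * t) ^ (-1 / γ) * q.1 * t,
      (m * t) ^ (-1 / γ) * q.1 * t * q.2.1, q.2.2)) (by fun_prop)
  · filter_upwards [eventually_gt_atTop 0] with t ht
    filter_upwards [hNr, hNv] with q hr hv
    exact psi_bound θ _ _ _ _ hp1.le (by linarith) (by positivity) hv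
  · filter_upwards [hNr, hNv, hNs] with q hr hv hs
    have ha : Tendsto (fun t : ℝ => (m * t) ^ (-1 / γ) * q.1 * t) atTop atTop := by
      have h1 : Tendsto (fun t : ℝ => (m ^ (-1 / γ) * q.1) * t ^ (1 - 1 / γ)) atTop atTop := by
        refine Tendsto.const_mul_atTop (by positivity) (tendsto_rpow_atTop ?_)
        rw [sub_pos, div_lt_one (by linarith)]; exact hγ1
      refine h1.congr' ?_
      filter_upwards [eventually_gt_atTop 0] with t ht
      rw [Real.mul_rpow hm.le ht.le, sub_eq_add_neg, Real.rpow_add ht, Real.rpow_one, neg_div]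
      ring
    have h2 := ha.eventually (ellK_lim q.2.1 q.2.2 hv hs.1 hs.2)
    refine tendsto_const_nhds.congr' ?_
    filter_upwards [h2] with t ht
    rw [ht]

lemma cont_limit (γ : ℝ) (hγ1 : 1 < γ) (hγ2 : γ < 2) :
    ContinuousAt (fun θ : ℝ => ∫ v, psiK (θ * v) ∂(muU γ)) 0 := by
  have hp1 : 1 < (1 + γ) / 2 := by linarith
  have hp2 : (1 + γ) / 2 < γ := by linarith
  refine continuousAt_of_dominated (bound := fun v => 4 * min (v ^ ((1 + γ) / 2)) (v ^ 2)) ?_ ?_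
    ((integrable_k γ _ hp2 hγ2).const_mul _) ?_
  · exact Eventually.of_forall fun t =>
      (psiK_cont.comp (by fun_prop : Continuous fun v : ℝ => t * v)).aestronglyMeasurable
  · filter_upwards [Metric.ball_mem_nhds (0:ℝ) one_pos] with θ hθ
    filter_upwards [muU_ae γ] with v hv
    rw [mem_ball_zero_iff, Real.norm_eq_abs] at hθ
    have h1 := psiK_mul_le θ v hv.le
    have h2 : min v (v ^ 2) ≤ min (v ^ ((1 + γ) / 2)) (v ^ 2) :=
      le_min (min_le_rpow v _ hv.le hp1.le (by linarith)) (min_le_right _ _)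
    have h3 : 2 * (|θ| + θ ^ 2) ≤ 4 := by
      rw [← sq_abs θ]; nlinarith [abs_nonneg θ]
    calc _ ≤ _ := h1
      _ ≤ _ := by gcongr
  · refine Eventually.of_forall fun v => ?_
    exact (psiK_cont.comp (by fun_prop : Continuous fun t : ℝ => t * v)).continuousAt

lemma psiK_eq (θ v : ℝ) : Complex.exp (θ * v * Complex.I) - 1 - θ * v * Complex.I = psiK (θ * v) := by
  simp [psiK]


/-- Limit theorem: `(E[R^γ] t)^{-1/γ} Y_t` converges in distribution, as `t → ∞`, to a
random variable `S` with characteristic function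
`E e^{iθS} = exp(Q ∫_0^∞ (e^{iθu} - 1 - iθu) u^{-γ-1} du)`. -/
theorem stmt_0 (γ Q : ℝ) (hγ1 : 1 < γ) (hγ2 : γ < 2) (hQ : 0 < Q)
    (FR : Measure ℝ) [IsProbabilityMeasure FR] (hFRpos : FR (Set.Iic 0) = 0)
    (hmom : Integrable (fun r => r ^ γ) FR)
    (Ω : Type*) [MeasurableSpace Ω] (P : Measure Ω) [IsProbabilityMeasure P]
    (Y : ℝ → Ω → ℝ) (hYmeas : ∀ t, Measurable (Y t))
    (hYchar : ∀ t : ℝ, 0 < t → ∀ θ : ℝ,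
      ∫ ω, Complex.exp (θ * Y t ω * Complex.I) ∂P
        = Complex.exp (Q * ∫ v, (Complex.exp (θ * v * Complex.I) - 1 - θ * v * Complex.I)
            ∂(muEllR γ t FR))) :
    ∃ μS : Measure ℝ, IsProbabilityMeasure μS ∧
      (∀ θ : ℝ, ∫ x, Complex.exp (θ * x * Complex.I) ∂μS
          = Complex.exp (Q * ∫ u in Set.Ioi (0 : ℝ),
              (Complex.exp (θ * u * Complex.I) - 1 - θ * u * Complex.I)
                * ((u ^ (-γ - 1) : ℝ) : ℂ))) ∧
      ∀ f : BoundedContinuousFunction ℝ ℝ,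
        Tendsto (fun t => ∫ ω, f ((((∫ r, r ^ γ ∂FR) * t) ^ (-1 / γ)) * Y t ω) ∂P)
          atTop (𝓝 (∫ x, f x ∂μS)) := by
  have hlim : ∀ θ : ℝ, ∫ u in Set.Ioi (0 : ℝ),
              (Complex.exp (θ * u * Complex.I) - 1 - θ * u * Complex.I)
                * ((u ^ (-γ - 1) : ℝ) : ℂ) = ∫ v, psiK (θ * v) ∂(muU γ) := by
    intro θ
    rw [integral_muU]
    simp_rw [psiK_eq]
  simp_rw [hlim]
  set m := ∫ r, r ^ γ ∂FR with hmdef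
  have hmeas : ∀ t : ℝ, Measurable (fun ω => (m * t) ^ (-1 / γ) * Y t ω) := fun t =>
    (hYmeas t).const_mul _
  let L : ℝ → ProbabilityMeasure ℝ := fun t =>
    ⟨P.map (fun ω => (m * t) ^ (-1 / γ) * Y t ω),
      Measure.isProbabilityMeasure_map (hmeas t).aemeasurable⟩
  have hchar : ∀ θ : ℝ, Tendsto (fun t => charFun (L t : Measure ℝ) θ) atTop
      (𝓝 (Complex.exp (Q * ∫ v, psiK (θ * v) ∂(muU γ)))) := by
    intro θ
    have h1 := tendsto_exponent γ hγ1 hγ2 FR hFRpos hmom θ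
    have h2 := (Complex.continuous_exp.tendsto _).comp (h1.const_mul (Q : ℂ))
    refine h2.congr' ?_
    filter_upwards [eventually_gt_atTop 0] with t ht
    have h3 := hYchar t ht (θ * (m * t) ^ (-1 / γ))
    simp_rw [psiK_eq] at h3
    simp only [Function.comp]
    rw [← hmdef, ← h3, charFun_apply_real]
    change _ = ∫ x, _ ∂(P.map (fun ω => (m * t) ^ (-1 / γ) * Y t ω))
    rw [integral_map (hmeas t).aemeasurable (by fun_prop)]
    congr 1
    ext ω
    push_cast
    ring_nf
  have hcont : ContinuousAt (fun θ : ℝ => Complex.exp (Q * ∫ v, psiK (θ * v) ∂(muU γ))) 0 :=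
    ((cont_limit γ hγ1 hγ2).const_mul (Q : ℂ)).cexp
  have hseq : ∀ θ : ℝ, Tendsto (fun n : ℕ => charFun (L n : Measure ℝ) θ) atTop
      (𝓝 (Complex.exp (Q * ∫ v, psiK (θ * v) ∂(muU γ)))) := fun θ =>
    (hchar θ).comp tendsto_natCast_atTop_atTop
  have htight := isTightMeasureSet_of_tendsto_charFun
    (μ := fun n : ℕ => (L n : Measure ℝ)) hcont hseq
  have hcomp : IsCompact (closure (Set.range fun n : ℕ => L n)) := by
    apply isCompact_closure_of_isTightMeasureSet
    convert htight using 1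
    ext x
    simp
  obtain ⟨μS, -, φ, hφ, hφlim⟩ := hcomp.isSeqCompact
    (fun n : ℕ => subset_closure (Set.mem_range_self (f := fun n : ℕ => L n) n))
  have hS : ∀ θ : ℝ, charFun (μS : Measure ℝ) θ =
      Complex.exp (Q * ∫ v, psiK (θ * v) ∂(muU γ)) := by
    intro θ
    exact tendsto_nhds_unique ((ProbabilityMeasure.tendsto_iff_tendsto_charFun.1 hφlim) θ)
      ((hseq θ).comp hφ.tendsto_atTop)
  refine ⟨μS, inferInstance, fun θ => ?_, fun f => ?_⟩
  · rw [← hS θ, charFun_apply_real]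
  · apply tendsto_of_seq_tendsto
    intro u hu
    have hw : Tendsto (fun n => L (u n)) atTop (𝓝 μS) := by
      rw [ProbabilityMeasure.tendsto_iff_tendsto_charFun]
      intro θ
      rw [hS θ]
      exact (hchar θ).comp hu
    rw [ProbabilityMeasure.tendsto_iff_forall_integral_tendsto] at hw
    refine (hw f).congr fun n => ?_
    change ∫ x, f x ∂(P.map (fun ω => (m * u n) ^ (-1 / γ) * Y (u n) ω)) = _
    rw [integral_map (hmeas (u n)).aemeasurable f.continuous.aestronglyMeasurable]
    rfl
end

section
/- Let ρ : (0,∞) → (0,∞) satisfy ρ(t)/t^{1/γ} → ∞ and ρ(t)/t → 0 as t → ∞. Then P(Y_t ≥ ρ(t)) = D · t · ρ(t)^{−γ} · (1 + o(1)) as t → ∞, where D := Q·E[R^γ]/γ; equivalently, P(Y_t ≥ ρ(t)) / (t·ρ(t)^{−γ}) → Q·E[R^γ]/γ. -/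
open MeasureTheory Filter Set
open scoped ENNReal NNReal Topology

/-- Convolution powers. -/
noncomputable def cpow (ν : Measure ℝ) : ℕ → Measure ℝ
  | 0 => Measure.dirac 0
  | k + 1 => ν.conv (cpow ν k)

instance cpow_fin (ν : Measure ℝ) [IsFiniteMeasure ν] (k : ℕ) : IsFiniteMeasure (cpow ν k) := by
  induction k with
  | zero => unfold cpow; infer_instance
  | succ k ih => unfold cpow; infer_instance

lemma cpow_univ (ν : Measure ℝ) [IsFiniteMeasure ν] (k : ℕ) :
    cpow ν k univ = ENNReal.ofReal (ν.real univ ^ k) := by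
  induction k with
  | zero => simp [cpow]
  | succ k ih =>
    have : cpow ν (k+1) univ = ν univ * cpow ν k univ := by
      simp only [cpow, Measure.conv]
      rw [Measure.map_apply (by fun_prop) MeasurableSet.univ, preimage_univ, Measure.prod_apply .univ]
      simp [mul_comm]
    rw [this, ih, pow_succ', ENNReal.ofReal_mul (by positivity), ofReal_measureReal]

lemma cpow_one (ν : Measure ℝ) [IsFiniteMeasure ν] : cpow ν 1 = ν := by
  simp [cpow]

lemma charFun_cpow (ν : Measure ℝ) [IsFiniteMeasure ν] (k : ℕ) (θ : ℝ) :
    charFun (cpow ν k) θ = charFun ν θ ^ k := by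
  induction k with
  | zero => simp [cpow]
  | succ k ih => simp only [cpow]; rw [charFun_conv, ih, pow_succ']

/-- Compound Poisson law. -/
noncomputable def cpois (ν : Measure ℝ) : Measure ℝ :=
  Measure.sum fun k : ℕ => ENNReal.ofReal (Real.exp (-ν.real univ) / (k.factorial : ℝ)) • cpow ν k

lemma hasSum_pois (l : ℝ) : HasSum (fun k : ℕ => Real.exp (-l) / (k.factorial : ℝ) * l ^ k) 1 := by
  have h := (NormedSpace.expSeries_div_hasSum_exp (𝔸 := ℝ) l).mul_left (Real.exp (-l))
  rw [← Real.exp_eq_exp_ℝ, ← Real.exp_add] at h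
  simp only [neg_add_cancel, Real.exp_zero] at h
  refine (congrArg (HasSum · 1) (funext fun k => ?_)).mp h
  ring

lemma tsum_pois_ofReal (l : ℝ) (hl : 0 ≤ l) :
    ∑' k : ℕ, ENNReal.ofReal (Real.exp (-l) / (k.factorial : ℝ)) * ENNReal.ofReal (l ^ k) = 1 := by
  have : ∀ k : ℕ, ENNReal.ofReal (Real.exp (-l) / (k.factorial : ℝ)) * ENNReal.ofReal (l ^ k)
    = ENNReal.ofReal (Real.exp (-l) / (k.factorial : ℝ) * l ^ k) := fun k => by
      rw [ENNReal.ofReal_mul (by positivity)]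
  simp_rw [this]
  rw [← ENNReal.ofReal_tsum_of_nonneg (fun k => by positivity) (hasSum_pois l).summable,
    (hasSum_pois l).tsum_eq, ENNReal.ofReal_one]

instance cpois_prob (ν : Measure ℝ) [IsFiniteMeasure ν] : IsProbabilityMeasure (cpois ν) := by
  constructor
  rw [cpois, Measure.sum_apply _ .univ]
  simp only [Measure.smul_apply, cpow_univ, smul_eq_mul]
  exact tsum_pois_ofReal _ (by positivity)

lemma charFun_cpois (ν : Measure ℝ) [IsFiniteMeasure ν] (θ : ℝ) :
    charFun (cpois ν) θ = Complex.exp (charFun ν θ - (ν.real univ : ℝ)) := by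
  have hI : Integrable (fun x : ℝ => Complex.exp (θ * x * Complex.I)) (cpois ν) := by
    refine Integrable.of_bound (by fun_prop) 1 (Eventually.of_forall fun x => ?_)
    have := Complex.norm_exp_ofReal_mul_I (θ * x)
    push_cast at this
    exact this.le
  rw [charFun_apply_real]
  have h1 := hasSum_integral_measure (μ := fun k : ℕ =>
    ENNReal.ofReal (Real.exp (-ν.real univ) / (k.factorial : ℝ)) • cpow ν k) hI
  have h2 : HasSum (fun k : ℕ => Complex.exp (-(ν.real univ : ℝ)) * (charFun ν θ ^ k / (k.factorial : ℂ)))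
      (Complex.exp (charFun ν θ - (ν.real univ : ℝ))) := by
    have h := (NormedSpace.expSeries_div_hasSum_exp (𝔸 := ℂ) (charFun ν θ)).mul_left
      (Complex.exp (-(ν.real univ : ℝ)))
    rw [← Complex.exp_eq_exp_ℂ, ← Complex.exp_add] at h
    rwa [neg_add_eq_sub] at h
  refine h1.unique ?_
  refine (congrArg (HasSum · _) (funext fun k => ?_)).mpr h2
  rw [integral_smul_measure, ← charFun_apply_real, charFun_cpow,
    ENNReal.toReal_ofReal (by positivity)]
  rw [Complex.real_smul]
  push_cast
  ring

lemma one_sub_exp_le (l : ℝ) (hl : 0 ≤ l) :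
    1 - Real.exp (-l) - Real.exp (-l) * l ≤ l ^ 2 := by
  nlinarith [Real.add_one_le_exp (-l)]

lemma cpois_upper (ν : Measure ℝ) [IsFiniteMeasure ν] (A : Set ℝ) (hA : MeasurableSet A)
    (h0 : (0:ℝ) ∉ A) : (cpois ν).real A ≤ ν.real A + (ν.real univ) ^ 2 := by
  set l := ν.real univ with hl
  have hl0 : 0 ≤ l := measureReal_nonneg
  have hs : HasSum (fun k : ℕ => Real.exp (-l) / (k.factorial : ℝ) * (cpow ν k).real A)
      ((cpois ν).real A) := by
    have h1 : Summable (fun k : ℕ => Real.exp (-l) / (k.factorial : ℝ) * (cpow ν k).real A) := by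
      refine Summable.of_nonneg_of_le (fun k => by positivity) (fun k => ?_) (hasSum_pois l).summable
      gcongr
      refine (measureReal_mono (subset_univ A)).trans ?_
      rw [Measure.real, cpow_univ, ENNReal.toReal_ofReal (by positivity)]
    rw [h1.hasSum_iff, Measure.real, cpois, Measure.sum_apply _ hA]
    rw [ENNReal.tsum_toReal_eq (fun k => by rw [Measure.smul_apply, smul_eq_mul]; finiteness)]
    refine tsum_congr fun k => ?_
    simp [Measure.real, hl]
    left
    rw [ENNReal.toReal_ofReal]; positivity
  have hs2 := hs.sub (f := fun k : ℕ => Real.exp (-l) / (k.factorial : ℝ) * (cpow ν k).real A)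
    (hasSum_pois l)
  have hle : ∀ k : ℕ, Real.exp (-l) / (k.factorial : ℝ) * (cpow ν k).real A ≤
     Real.exp (-l) / (k.factorial : ℝ) * l ^ k := fun k => by
      gcongr
      refine (measureReal_mono (subset_univ A)).trans ?_
      rw [Measure.real, cpow_univ, ENNReal.toReal_ofReal (by positivity)]
  have h3 := (hs2.neg).summable.sum_le_tsum (Finset.range 2) (fun k _ => by
    have := hle k; linarith)
  rw [hs2.neg.tsum_eq, Finset.sum_range_succ, Finset.sum_range_one] at h3
  have e0 : (cpow ν 0).real A = 0 := by simp [cpow, Measure.real, h0, hA]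
  simp only [e0, cpow_one] at h3
  simp at h3
  have h4 := one_sub_exp_le l hl0
  have h5 : Real.exp (-l) * ν.real A ≤ ν.real A :=
    mul_le_of_le_one_left measureReal_nonneg (by simpa using hl0)
  linarith

lemma cpois_lower (ν : Measure ℝ) [IsFiniteMeasure ν] (A : Set ℝ) :
    Real.exp (-ν.real univ) * ν.real A ≤ (cpois ν).real A := by
  have h1 : ENNReal.ofReal (Real.exp (-ν.real univ)) * ν A ≤ cpois ν A := by
    have := Measure.le_sum (fun k : ℕ =>
      ENNReal.ofReal (Real.exp (-ν.real univ) / (k.factorial : ℝ)) • cpow ν k) 1 A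
    simpa [cpow_one, cpois] using this
  have h2 := ENNReal.toReal_mono (by finiteness) h1
  rwa [ENNReal.toReal_mul, ENNReal.toReal_ofReal (by positivity)] at h2

/-- the compensated exponential integrand -/
noncomputable def kerE (θ v : ℝ) : ℂ := Complex.exp (θ * v * Complex.I) - 1 - θ * v * Complex.I

lemma kerE_cont (θ : ℝ) : Continuous (kerE θ) := by unfold kerE; fun_prop

lemma kerE_le1 (θ v : ℝ) : ‖kerE θ v‖ ≤ 2 * (|θ| * |v|) := by
  have h1 : ‖Complex.exp (θ * v * Complex.I) - 1‖ ≤ |θ| * |v| := by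
    have := @Real.norm_exp_I_mul_ofReal_sub_one_le (θ * v)
    rw [Real.norm_eq_abs, abs_mul] at this
    convert this using 4
    push_cast; ring
  have h2 : ‖(θ * v * Complex.I : ℂ)‖ = |θ| * |v| := by simp
  have := norm_sub_le (Complex.exp (θ * v * Complex.I) - 1) (θ * v * Complex.I)
  unfold kerE
  linarith

lemma kerE_le2 (θ v : ℝ) : ‖kerE θ v‖ ≤ 2 * θ ^ 2 * v ^ 2 := by
  have h2 : ‖(θ * v * Complex.I : ℂ)‖ = |θ| * |v| := by simp
  have h3 : θ ^ 2 * v ^ 2 = (|θ| * |v|) ^ 2 := by rw [mul_pow, sq_abs, sq_abs]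
  by_cases h : |θ| * |v| ≤ 1
  · have := Complex.norm_exp_sub_one_sub_id_le (x := θ * v * Complex.I) (by rw [h2]; exact h)
    rw [h2, ← h3] at this
    unfold kerE
    have : 0 ≤ θ ^ 2 * v ^ 2 := by positivity
    linarith
  · have := kerE_le1 θ v
    nlinarith

/-- compensated compound Poisson -/
noncomputable def cpc (ν : Measure ℝ) : Measure ℝ := (cpois ν).map (· + (-∫ v, v ∂ν))

instance cpc_prob (ν : Measure ℝ) [IsFiniteMeasure ν] : IsProbabilityMeasure (cpc ν) :=
  Measure.isProbabilityMeasure_map (by fun_prop)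

lemma charFun_cpc (ν : Measure ℝ) [IsFiniteMeasure ν] (hν : Integrable (fun v => v) ν) (θ : ℝ) :
    charFun (cpc ν) θ = Complex.exp (∫ v, kerE θ v ∂ν) := by
  have hI : Integrable (fun x : ℝ => Complex.exp (θ * x * Complex.I)) ν := by
    refine Integrable.of_bound (by fun_prop) 1 (Eventually.of_forall fun x => ?_)
    have := Complex.norm_exp_ofReal_mul_I (θ * x)
    push_cast at this
    exact this.le
  have hJ : Integrable (fun x : ℝ => (x : ℂ)) ν := hν.ofReal
  rw [cpc, charFun_map_add_const, charFun_cpois, ← Complex.exp_add]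
  congr 1
  have h2 : Integrable (fun x : ℝ => (θ * x * Complex.I : ℂ)) ν := (hJ.const_mul _).mul_const _
  simp only [kerE]
  have h3 : Integrable (fun x : ℝ => Complex.exp (θ * x * Complex.I) - 1) ν := hI.sub (integrable_const _)
  rw [integral_sub h3 h2, integral_sub hI (integrable_const _),
    integral_mul_const, integral_const_mul, charFun_apply_real, integral_complex_ofReal]
  simp [inner]
  ring

lemma cpc_tail (ν : Measure ℝ) [IsFiniteMeasure ν] (hν : Integrable (fun v => v) ν)
    (hν2 : Integrable (fun v => v ^ 2) ν) (d : ℝ) (hd : 0 < d) :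
    (cpc ν).real {x | d < |x|} ≤ 32 * (∫ v, v ^ 2 ∂ν) / d ^ 2 := by
  set s := ∫ v, v ^ 2 ∂ν with hs
  have hs0 : 0 ≤ s := integral_nonneg fun v => by positivity
  have hb : ∀ θ : ℝ, ‖1 - charFun (cpc ν) θ‖ ≤ 4 * θ ^ 2 * s := by
    intro θ
    have h1 : ‖∫ v, kerE θ v ∂ν‖ ≤ 2 * θ ^ 2 * s := by
      rw [hs, ← integral_const_mul]
      exact norm_integral_le_of_norm_le (hν2.const_mul _) (Eventually.of_forall fun v => kerE_le2 θ v)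
    have h2 : ‖1 - charFun (cpc ν) θ‖ ≤ 2 * ‖∫ v, kerE θ v ∂ν‖ := by
      by_cases h : ‖∫ v, kerE θ v ∂ν‖ ≤ 1
      · rw [norm_sub_rev, charFun_cpc ν hν]
        exact Complex.norm_exp_sub_one_le h
      · have h3 := norm_charFun_le_one (μ := cpc ν) θ
        have h4 := norm_sub_le 1 (charFun (cpc ν) θ)
        rw [norm_one] at h4
        linarith
    linarith
  have h := measureReal_abs_gt_le_integral_charFun (μ := cpc ν) hd
  have h2 : ‖∫ t in (-2 * d⁻¹)..(2 * d⁻¹), 1 - charFun (cpc ν) t‖ ≤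
      (16 * s / d ^ 2) * |2 * d⁻¹ - (-2 * d⁻¹)| := by
    refine intervalIntegral.norm_integral_le_of_norm_le_const fun t ht => ?_
    refine (hb t).trans ?_
    have hd' : 0 < d⁻¹ := by positivity
    rw [uIoc_of_le (by linarith)] at ht
    have : t ^ 2 ≤ (2 * d⁻¹) ^ 2 := sq_le_sq' (by linarith [ht.1]) ht.2
    calc 4 * t ^ 2 * s ≤ 4 * (2 * d⁻¹) ^ 2 * s := by gcongr
      _ = _ := by field_simp; ring
  refine h.trans ((mul_le_mul_of_nonneg_left h2 (by positivity)).trans (le_of_eq ?_))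
  rw [abs_of_nonneg (by have : 0 < d⁻¹ := by positivity
                        linarith)]
  field_simp
  ring

lemma conv_upper (μ₁ μ₂ : Measure ℝ) [IsProbabilityMeasure μ₁] [IsProbabilityMeasure μ₂] (y d : ℝ) :
    (μ₁.conv μ₂).real (Ici y) ≤ μ₁.real (Ici (y - d)) + μ₂.real {x | d < |x|} := by
  have hm : MeasurableSet {x : ℝ | d < |x|} := measurableSet_lt (by fun_prop) (by fun_prop)
  rw [Measure.conv, measureReal_def, Measure.map_apply (by fun_prop) measurableSet_Ici, ← measureReal_def]
  calc (μ₁.prod μ₂).real _ ≤ (μ₁.prod μ₂).real ((Ici (y - d) ×ˢ univ) ∪ (univ ×ˢ {x | d < |x|})) := by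
        refine measureReal_mono ?_
        rintro ⟨p, q⟩ h
        simp only [mem_preimage, mem_Ici] at h
        by_cases hq : d < |q|
        · right; simpa using hq
        · left
          simp only [mem_prod, mem_Ici, mem_univ, and_true]
          have := le_abs_self q
          linarith
    _ ≤ _ := measureReal_union_le _ _
    _ = _ := by simp [measureReal_prod_prod]

lemma conv_lower (μ₁ μ₂ : Measure ℝ) [IsProbabilityMeasure μ₁] [IsProbabilityMeasure μ₂] (y d : ℝ) :
    μ₁.real (Ici (y + d)) * (1 - μ₂.real {x | d < |x|}) ≤ (μ₁.conv μ₂).real (Ici y) := by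
  have hm : MeasurableSet {x : ℝ | d < |x|} := measurableSet_lt (by fun_prop) (by fun_prop)
  rw [Measure.conv, measureReal_def (Measure.map _ _), Measure.map_apply (by fun_prop) measurableSet_Ici, ← measureReal_def,
    ← probReal_compl_eq_one_sub hm, ← measureReal_prod_prod]
  refine measureReal_mono ?_
  rintro ⟨p, q⟩ h
  simp only [mem_prod, mem_Ici, mem_compl_iff, mem_ofPred_eq, not_lt] at h
  simp only [mem_preimage, mem_Ici]
  have := neg_abs_le q
  linarith

lemma weak_open (π : ℕ → Measure ℝ) [∀ n, IsProbabilityMeasure (π n)] (π₀ : Measure ℝ)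
    [IsProbabilityMeasure π₀]
    (h : ∀ θ, Tendsto (fun n => charFun (π n) θ) atTop (𝓝 (charFun π₀ θ)))
    (G : Set ℝ) (hG : IsOpen G) (c : ℝ) (hc : ∀ n, (π n).real G ≤ c) : π₀.real G ≤ c := by
  let p : ℕ → ProbabilityMeasure ℝ := fun n => ⟨π n, inferInstance⟩
  let p₀ : ProbabilityMeasure ℝ := ⟨π₀, inferInstance⟩
  have h1 : Tendsto p atTop (𝓝 p₀) := ProbabilityMeasure.tendsto_of_tendsto_charFun h
  have h2 := ProbabilityMeasure.le_liminf_measure_open_of_tendsto h1 hG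
  have hc0 : 0 ≤ c := measureReal_nonneg.trans (hc 0)
  have h3 : π₀ G ≤ ENNReal.ofReal c := by
    refine h2.trans ?_
    refine liminf_le_of_le (by isBoundedDefault) fun b hb => ?_
    obtain ⟨n, hn⟩ := hb.exists
    refine hn.trans ?_
    change π n G ≤ _
    rw [← ofReal_measureReal]
    exact ENNReal.ofReal_le_ofReal (hc n)
  exact ENNReal.toReal_le_of_le_ofReal hc0 h3

lemma weak_closed (π : ℕ → Measure ℝ) [∀ n, IsProbabilityMeasure (π n)] (π₀ : Measure ℝ)
    [IsProbabilityMeasure π₀]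
    (h : ∀ θ, Tendsto (fun n => charFun (π n) θ) atTop (𝓝 (charFun π₀ θ)))
    (C : Set ℝ) (hC : IsClosed C) (c : ℝ) (hc : ∀ n, c ≤ (π n).real C) : c ≤ π₀.real C := by
  have := weak_open π π₀ h Cᶜ hC.isOpen_compl (1 - c) (fun n => by
    rw [probReal_compl_eq_one_sub hC.measurableSet]; linarith [hc n])
  rw [probReal_compl_eq_one_sub hC.measurableSet] at this
  linarith

section
variable (ν : Measure ℝ) (a : ℝ)

lemma fin_of_integ {s : Set ℝ} (hs : MeasurableSet s) {f : ℝ → ℝ} (hf : IntegrableOn f s ν) {c : ℝ}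
    (hc : 0 < c) (h : ∀ x ∈ s, c ≤ f x) : IsFiniteMeasure (ν.restrict s) := by
  have h1 : IntegrableOn (fun _ => c) s ν := by
    refine Integrable.mono' hf (by fun_prop) ?_
    filter_upwards [ae_restrict_mem hs] with x hx
    rw [Real.norm_of_nonneg hc.le]; exact h x hx
  unfold IntegrableOn at h1
  rwa [integrable_const_iff_isFiniteMeasure hc.ne'] at h1

lemma approx (h0 : ν (Iic 0) = 0) (ha : 0 < a) (h2 : IntegrableOn (fun v => v ^ 2) (Ioo 0 a) ν)
    (h1 : IntegrableOn (fun v => v) (Ici a) ν)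
    (π₀ : Measure ℝ) [IsProbabilityMeasure π₀]
    (hπ : ∀ θ, charFun π₀ θ = Complex.exp (∫ v, kerE θ v ∂ν)) :
    IsFiniteMeasure (ν.restrict (Ici a)) ∧ ∃ S : ℕ → Measure ℝ, (∀ n, IsProbabilityMeasure (S n)) ∧
      (∀ n, ∀ d > 0, (S n).real {x | d < |x|} ≤ 32 * (∫ v in Ioo 0 a, v ^ 2 ∂ν) / d ^ 2) ∧
      ∀ θ, Tendsto (fun n => charFun ((cpc (ν.restrict (Ici a))).conv (S n)) θ) atTop
        (𝓝 (charFun π₀ θ)) := by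
  have hfin : IsFiniteMeasure (ν.restrict (Ici a)) :=
    fin_of_integ ν measurableSet_Ici h1 ha (fun x hx => hx)
  refine ⟨hfin, ?_⟩
  set A : ℕ → Set ℝ := fun n => Ico (a / (n + 1)) a with hA
  have hAm : ∀ n, MeasurableSet (A n) := fun n => measurableSet_Ico
  have hpos : ∀ n : ℕ, 0 < a / (n + 1) := fun n => by positivity
  have hAs : ∀ n, A n ⊆ Ioo 0 a := fun n x hx => ⟨(hpos n).trans_le hx.1, hx.2⟩
  have hAU : ⋃ n, A n = Ioo 0 a := by
    refine subset_antisymm (iUnion_subset hAs) fun x hx => ?_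
    obtain ⟨n, hn⟩ := exists_nat_gt (a / x)
    refine mem_iUnion.2 ⟨n, ?_, hx.2⟩
    have hx0 := hx.1
    rw [div_lt_iff₀ hx0] at hn
    rw [div_le_iff₀ (by positivity)]
    nlinarith
  have hmono : Monotone A := by
    intro m n hmn
    refine Ico_subset_Ico_left ?_
    have : (m : ℝ) ≤ n := by exact_mod_cast hmn
    gcongr
  have hAf : ∀ n, IsFiniteMeasure (ν.restrict (A n)) := fun n =>
    fin_of_integ ν (hAm n) (h2.mono_set (hAs n)) (c := (a / (n + 1)) ^ 2) (by have := hpos n; positivity)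
      (fun x hx => by have := hpos n; have := hx.1; gcongr)
  have hA1 : ∀ n, Integrable (fun v => v) (ν.restrict (A n)) := fun n => by
    refine Integrable.of_bound (by fun_prop) a ?_
    filter_upwards [ae_restrict_mem (hAm n)] with x hx
    rw [Real.norm_of_nonneg ((hpos n).le.trans hx.1)]; exact hx.2.le
  refine ⟨fun n => cpc (ν.restrict (A n)), fun n => inferInstance, fun n d hd => ?_, fun θ => ?_⟩
  · refine (cpc_tail _ (hA1 n) (h2.mono_set (hAs n)) d hd).trans ?_
    have hh : ∫ v in A n, v ^ 2 ∂ν ≤ ∫ v in Ioo 0 a, v ^ 2 ∂ν :=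
      setIntegral_mono_set h2 (Eventually.of_forall fun v => by positivity) (hAs n).eventuallyLE
    exact div_le_div_of_nonneg_right (mul_le_mul_of_nonneg_left hh (by norm_num)) (by positivity)
  · have hk1 : IntegrableOn (kerE θ) (Ici a) ν := by
      refine Integrable.mono' (g := fun v => 2 * (|θ| * |v|)) ?_ (kerE_cont θ).aestronglyMeasurable
        (Eventually.of_forall fun v => kerE_le1 θ v)
      exact (h1.abs.const_mul _).const_mul _
    have hk2 : IntegrableOn (kerE θ) (Ioo 0 a) ν := by
      refine Integrable.mono' (g := fun v => 2 * θ ^ 2 * v ^ 2) ?_ (kerE_cont θ).aestronglyMeasurable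
        (Eventually.of_forall fun v => kerE_le2 θ v)
      exact h2.const_mul _
    have hsplit : ∫ v, kerE θ v ∂ν = ∫ v in Ici a, kerE θ v ∂ν + ∫ v in Ioo 0 a, kerE θ v ∂ν := by
      rw [← setIntegral_union _ measurableSet_Ioo hk1 hk2]
      · rw [← setIntegral_univ]
        refine setIntegral_congr_set ?_
        refine (ae_eq_univ.2 ?_).symm
        refine measure_mono_null ?_ h0
        intro x hx
        simp only [mem_compl_iff, mem_union, mem_Ici, mem_Ioo, not_or, not_le, not_and] at hx
        by_contra hx0
        simp only [mem_Iic, not_le] at hx0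
        exact hx.2 hx0 hx.1
      · rw [Set.disjoint_left]
        intro x hx hx'
        exact absurd hx'.2 (not_lt.2 hx)
    rw [hπ, hsplit, Complex.exp_add]
    have hlim := tendsto_setIntegral_of_monotone (f := kerE θ) (μ := ν) hAm hmono (by rw [hAU]; exact hk2)
    rw [hAU] at hlim
    have := ((Complex.continuous_exp.tendsto _).comp hlim).const_mul
      (Complex.exp (∫ v in Ici a, kerE θ v ∂ν))
    refine this.congr fun n => ?_
    rw [charFun_conv, charFun_cpc _ h1, charFun_cpc _ (hA1 n)]
    rfl

lemma cpc_Ici (μ : Measure ℝ) (y : ℝ) :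
    (cpc μ).real (Ici y) = (cpois μ).real (Ici (y + ∫ v, v ∂μ)) := by
  rw [cpc, measureReal_def, Measure.map_apply (by fun_prop) measurableSet_Ici, ← measureReal_def]
  congr 1
  ext x
  simp only [mem_preimage, mem_Ici]
  constructor <;> intro h <;> linarith

theorem abs_bounds (h0 : ν (Iic 0) = 0) (ha : 0 < a) (h2 : IntegrableOn (fun v => v ^ 2) (Ioo 0 a) ν)
    (h1 : IntegrableOn (fun v => v) (Ici a) ν)
    (π₀ : Measure ℝ) [IsProbabilityMeasure π₀]
    (hπ : ∀ θ, charFun π₀ θ = Complex.exp (∫ v, kerE θ v ∂ν)) (x d : ℝ) (hd : 0 < d)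
    (hx : a ≤ x - 2 * d) :
    π₀.real (Ici x) ≤ ν.real (Ici (x - 2 * d)) + ν.real (Ici a) ^ 2
        + 32 * (∫ v in Ioo 0 a, v ^ 2 ∂ν) / d ^ 2 ∧
    Real.exp (- ν.real (Ici a)) * ν.real (Ici (x + d + ∫ v in Ici a, v ∂ν)) *
      (1 - 32 * (∫ v in Ioo 0 a, v ^ 2 ∂ν) / d ^ 2) ≤ π₀.real (Ici x) := by
  obtain ⟨hfin, S, hS, hSt, hlim⟩ := approx ν a h0 ha h2 h1 π₀ hπ
  set m := ∫ v in Ici a, v ∂ν with hm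
  have hm0 : 0 ≤ m := setIntegral_nonneg measurableSet_Ici fun v hv => ha.le.trans hv
  have hu : (ν.restrict (Ici a)).real univ = ν.real (Ici a) := by simp [measureReal_def]
  have hI : ∀ y, a ≤ y → (ν.restrict (Ici a)).real (Ici y) = ν.real (Ici y) := by
    intro y hy
    rw [measureReal_def, Measure.restrict_apply measurableSet_Ici,
      inter_eq_self_of_subset_left (Ici_subset_Ici.2 hy), measureReal_def]
  constructor
  · have key := weak_open _ π₀ hlim (Ioi (x - d)) isOpen_Ioi
      (ν.real (Ici (x - 2 * d)) + ν.real (Ici a) ^ 2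
        + 32 * (∫ v in Ioo 0 a, v ^ 2 ∂ν) / d ^ 2) (fun n => by
      refine (measureReal_mono Ioi_subset_Ici_self).trans ((conv_upper _ _ (x - d) d).trans ?_)
      refine add_le_add ?_ (hSt n d hd)
      rw [cpc_Ici]
      have e : x - d - d = x - 2 * d := by ring
      refine (measureReal_mono (Ici_subset_Ici.2 (show x - 2 * d ≤ _ by linarith))).trans ?_
      refine (cpois_upper _ _ measurableSet_Ici (by simp only [mem_Ici]; linarith)).trans ?_
      rw [hu, hI _ hx])
    refine le_trans (measureReal_mono ?_) key
    exact Ici_subset_Ioi.2 (by linarith)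
  · have hp : 0 ≤ Real.exp (- ν.real (Ici a)) * ν.real (Ici (x + d + m)) := by positivity
    refine weak_closed _ π₀ hlim (Ici x) isClosed_Ici _ (fun n => ?_)
    have h3 := conv_lower (cpc (ν.restrict (Ici a))) (S n) x d
    have h4 := hSt n d hd
    have h5 := cpois_lower (ν.restrict (Ici a)) (Ici (x + d + m))
    rw [hu, hI _ (by linarith)] at h5
    rw [cpc_Ici] at h3
    have h6 : (S n).real {x | d < |x|} ≤ 1 := measureReal_le_one
    calc _ ≤ Real.exp (- ν.real (Ici a)) * ν.real (Ici (x + d + m)) * (1 - (S n).real {x | d < |x|}) := by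
          gcongr
      _ ≤ _ := by
          refine le_trans ?_ h3
          gcongr
end

lemma lint_Ioi_rpow (b a : ℝ) (hb : b < -1) (ha : 0 < a) :
    ∫⁻ u in Ioi a, ENNReal.ofReal (u ^ b) = ENNReal.ofReal (-a ^ (b + 1) / (b + 1)) := by
  rw [← integral_Ioi_rpow_of_lt hb ha, ofReal_integral_eq_lintegral_ofReal
    (integrableOn_Ioi_rpow_of_lt hb ha)]
  filter_upwards [ae_restrict_mem measurableSet_Ioi] with x hx
  exact Real.rpow_nonneg (ha.trans hx).le _

instance muU_sfinite (γ : ℝ) : SFinite (muU γ) := by unfold muU; infer_instance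
lemma muU_Ici (γ a : ℝ) (hγ : 0 < γ) (ha : 0 < a) :
    muU γ (Ici a) = ENNReal.ofReal (a ^ (-γ) / γ) := by
  rw [muU, withDensity_apply _ measurableSet_Ici, Measure.restrict_restrict measurableSet_Ici,
    inter_eq_self_of_subset_left (Ici_subset_Ioi.2 ha), setLIntegral_congr Ioi_ae_eq_Ici.symm,
    lint_Ioi_rpow _ _ (by linarith) ha]
  congr 1
  rw [show -γ - 1 + 1 = -γ by ring, neg_div_neg_eq]

lemma ellK_meas_s1 (t : ℝ) : Measurable (fun p : ℝ × ℝ => ellK t p.1 p.2) := by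
  unfold ellK; fun_prop

/-- tail of muEll -/
noncomputable def gtail (γ t y : ℝ) : ℝ :=
  if y ≤ t then y ^ (-γ) * (y / (γ * (γ - 1)) + (t - y) / γ) else 0

lemma muEll_Ici (γ t y : ℝ) (hγ1 : 1 < γ) (hy : 0 < y) :
    muEll γ t (Ici y) = ENNReal.ofReal (gtail γ t y) := by
  have hγ0 : 0 < γ := by linarith
  rw [muEll, Measure.restrict_apply measurableSet_Ici,
    inter_eq_self_of_subset_left (Ici_subset_Ioi.2 hy), Measure.map_apply (ellK_meas_s1 t) measurableSet_Ici,
    Measure.prod_apply (ellK_meas_s1 t measurableSet_Ici)]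
  have hset : ∀ s u, ellK t s u ∈ Ici y ↔ (y ≤ s + u - max s 0 ∧ y ≤ t - max s 0) := by
    intro s u
    simp only [ellK, mem_Ici, le_max_iff, not_le.2 hy, false_or, le_sub_iff_add_le, le_min_iff]
  by_cases hyt : y ≤ t
  · have hsec : ∀ s, muU γ (Prod.mk s ⁻¹' ((fun p : ℝ × ℝ => ellK t p.1 p.2) ⁻¹' Ici y)) =
        (Iio (0:ℝ)).indicator (fun s => ENNReal.ofReal ((y - s) ^ (-γ) / γ)) s +
        (Icc 0 (t - y)).indicator (fun _ => ENNReal.ofReal (y ^ (-γ) / γ)) s := by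
      intro s
      by_cases hs : s < 0
      · have e : Prod.mk s ⁻¹' ((fun p : ℝ × ℝ => ellK t p.1 p.2) ⁻¹' Ici y) = Ici (y - s) := by
          ext u
          simp only [mem_preimage]
          rw [hset, max_eq_right hs.le]
          simp only [mem_Ici]
          constructor
          · rintro ⟨h, -⟩; linarith
          · intro h; exact ⟨by linarith, by linarith⟩
        rw [e, muU_Ici _ _ hγ0 (by linarith), indicator_of_mem (by exact hs),
          indicator_of_notMem (by simp [hs]), add_zero]
      · push Not at hs
        rw [indicator_of_notMem (by simpa using hs), zero_add]
        by_cases hs2 : s ≤ t - y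
        · have e : Prod.mk s ⁻¹' ((fun p : ℝ × ℝ => ellK t p.1 p.2) ⁻¹' Ici y) = Ici y := by
            ext u
            simp only [mem_preimage]
            rw [hset, max_eq_left hs]
            simp only [mem_Ici]
            constructor
            · rintro ⟨h, -⟩; linarith
            · intro h; exact ⟨by linarith, by linarith⟩
          rw [e, muU_Ici _ _ hγ0 hy, indicator_of_mem (by exact ⟨hs, hs2⟩)]
        · have e : Prod.mk s ⁻¹' ((fun p : ℝ × ℝ => ellK t p.1 p.2) ⁻¹' Ici y) = ∅ := by
            ext u
            simp only [mem_preimage]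
            rw [hset, max_eq_left hs]
            simp only [mem_empty_iff_false, iff_false]
            rintro ⟨-, h⟩; exact hs2 (by linarith)
          rw [e, measure_empty, indicator_of_notMem (by intro h; exact hs2 h.2)]
    simp_rw [hsec]
    rw [lintegral_add_right _ (measurable_const.indicator measurableSet_Icc),
      lintegral_indicator_const measurableSet_Icc, Real.volume_Icc]
    have h1 : ∫⁻ s, (Iio (0:ℝ)).indicator (fun s => ENNReal.ofReal ((y - s) ^ (-γ) / γ)) s
        = ENNReal.ofReal (y ^ (1 - γ) / (γ * (γ - 1))) := by
      have : ∀ s, (Iio (0:ℝ)).indicator (fun s => ENNReal.ofReal ((y - s) ^ (-γ) / γ)) s =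
        (Ioi y).indicator (fun z => ENNReal.ofReal (1 / γ) * ENNReal.ofReal (z ^ (-γ))) (y - s) := by
        intro s
        by_cases hs : s < 0
        · rw [indicator_of_mem (by exact hs), indicator_of_mem (by rw [mem_Ioi]; linarith),
            ← ENNReal.ofReal_mul (by positivity)]
          congr 1; ring
        · rw [indicator_of_notMem (by exact hs), indicator_of_notMem (by rw [mem_Ioi]; linarith)]
      simp_rw [this]
      rw [lintegral_sub_left_eq_self (μ := volume) (fun z => (Ioi y).indicator (fun z => ENNReal.ofReal (1 / γ) * ENNReal.ofReal (z ^ (-γ))) z) y, lintegral_indicator measurableSet_Ioi, lintegral_const_mul' _ _ (by finiteness), lint_Ioi_rpow _ _ (by linarith) hy,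
        ← ENNReal.ofReal_mul (by positivity)]
      congr 1
      rw [show -γ + 1 = -(γ - 1) by ring, neg_div_neg_eq, show 1 - γ = -(γ-1) by ring, div_mul_div_comm, one_mul]
    have hp : y ^ (1 - γ) = y ^ (-γ) * y := by
      rw [show 1 - γ = -γ + 1 by ring, Real.rpow_add_one hy.ne']
    rw [h1, ← ENNReal.ofReal_mul (by positivity), ← ENNReal.ofReal_add (by have : 0 < γ - 1 := by linarith
                                                                           positivity) (mul_nonneg (by positivity) (by linarith)), gtail, if_pos hyt, hp]
    congr 1
    ring
  · rw [gtail, if_neg hyt, ENNReal.ofReal_zero]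
    have e : ∀ s, Prod.mk s ⁻¹' ((fun p : ℝ × ℝ => ellK t p.1 p.2) ⁻¹' Ici y) = ∅ := by
      intro s
      ext u
      simp only [mem_preimage]
      rw [hset]
      simp only [mem_empty_iff_false, iff_false]
      rintro ⟨-, h⟩; exact hyt (by linarith [le_max_right s 0])
    simp [e]

lemma gtail_nonneg (γ t y : ℝ) (hγ1 : 1 < γ) (hy : 0 < y) : 0 ≤ gtail γ t y := by
  unfold gtail
  split_ifs with h
  · have : 0 < γ - 1 := by linarith
    have : 0 ≤ t - y := by linarith
    positivity
  · exact le_rfl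

lemma gtail_le (γ t y : ℝ) (hγ1 : 1 < γ) (hy : 0 < y) (ht : 0 < t) :
    gtail γ t y ≤ t / (γ - 1) * y ^ (-γ) := by
  have h1 : 0 < γ - 1 := by linarith
  have h0 : 0 < γ := by linarith
  unfold gtail
  split_ifs with h
  · rw [mul_comm]
    gcongr
    have : t / (γ - 1) = t / (γ * (γ - 1)) + t / γ := by field_simp; ring
    rw [this]
    gcongr
    linarith
  · positivity

lemma muEllR_Ici (γ t x : ℝ) (FR : Measure ℝ) [IsProbabilityMeasure FR] (hFR : FR (Iic 0) = 0)
    (hγ1 : 1 < γ) (hx : 0 < x) :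
    muEllR γ t FR (Ici x) = ∫⁻ r, ENNReal.ofReal (gtail γ t (x / r)) ∂FR := by
  rw [muEllR, Measure.restrict_apply measurableSet_Ici,
    inter_eq_self_of_subset_left (Ici_subset_Ioi.2 hx), Measure.map_apply (by fun_prop) measurableSet_Ici,
    Measure.prod_apply ((by fun_prop : Measurable fun p : ℝ × ℝ => p.1 * p.2) measurableSet_Ici)]
  refine lintegral_congr_ae ?_
  have : ∀ᵐ r ∂FR, r ∉ Iic (0:ℝ) := measure_eq_zero_iff_ae_notMem.1 hFR
  filter_upwards [this] with r hr
  simp only [mem_Iic, not_le] at hr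
  rw [← muEll_Ici γ t _ hγ1 (by positivity)]
  congr 1
  ext l
  simp only [mem_preimage, mem_Ici]
  rw [div_le_iff₀ hr, mul_comm]

lemma gtail_meas (γ t : ℝ) : Measurable (gtail γ t) := by
  unfold gtail
  exact Measurable.ite measurableSet_Iic (by fun_prop) measurable_const

lemma muEllR_bound (γ t x : ℝ) (FR : Measure ℝ) [IsProbabilityMeasure FR] (hFR : FR (Iic 0) = 0)
    (hmom : Integrable (fun r => r ^ γ) FR)
    (hγ1 : 1 < γ) (hx : 0 < x) (ht : 0 < t) :
    muEllR γ t FR (Ici x) ≤ ENNReal.ofReal (t / (γ - 1) * (∫ r, r ^ γ ∂FR) * x ^ (-γ)) := by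
  have hpos : ∀ᵐ r ∂FR, r ∉ Iic (0:ℝ) := measure_eq_zero_iff_ae_notMem.1 hFR
  have h1 : 0 < γ - 1 := by linarith
  rw [muEllR_Ici _ _ _ _ hFR hγ1 hx]
  have e : t / (γ - 1) * (∫ r, r ^ γ ∂FR) * x ^ (-γ) = ∫ r, (t / (γ - 1) * x ^ (-γ)) * r ^ γ ∂FR := by
    rw [integral_const_mul]; ring
  rw [e, ofReal_integral_eq_lintegral_ofReal (hmom.const_mul _)]
  · refine lintegral_mono_ae ?_
    filter_upwards [hpos] with r hr
    simp only [mem_Iic, not_le] at hr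
    refine ENNReal.ofReal_le_ofReal ((gtail_le _ _ _ hγ1 (by positivity) ht).trans (le_of_eq ?_))
    rw [Real.div_rpow hx.le hr.le, Real.rpow_neg hr.le γ]
    field_simp
  · filter_upwards [hpos] with r hr
    simp only [mem_Iic, not_le] at hr
    simp only [Pi.zero_apply]
    positivity

lemma muEllR_real (γ t x : ℝ) (FR : Measure ℝ) [IsProbabilityMeasure FR] (hFR : FR (Iic 0) = 0)
    (hγ1 : 1 < γ) (hx : 0 < x) :
    (muEllR γ t FR).real (Ici x) = ∫ r, gtail γ t (x / r) ∂FR := by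
  have hpos : ∀ᵐ r ∂FR, r ∉ Iic (0:ℝ) := measure_eq_zero_iff_ae_notMem.1 hFR
  rw [measureReal_def, muEllR_Ici _ _ _ _ hFR hγ1 hx, integral_eq_lintegral_of_nonneg_ae]
  · filter_upwards [hpos] with r hr
    simp only [mem_Iic, not_le] at hr
    exact gtail_nonneg _ _ _ hγ1 (by positivity)
  · exact ((gtail_meas γ t).comp (by fun_prop)).aestronglyMeasurable

lemma muEllR_lim (γ : ℝ) (FR : Measure ℝ) [IsProbabilityMeasure FR] (hFR : FR (Iic 0) = 0)
    (hmom : Integrable (fun r => r ^ γ) FR)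
    (hγ1 : 1 < γ) (ρ : ℝ → ℝ) (hρpos : ∀ t, 0 < ρ t)
    (hρupp : Tendsto (fun t => ρ t / t) atTop (𝓝 0)) (c : ℝ) (hc : 0 < c) :
    Tendsto (fun t => (muEllR γ t FR).real (Ici (c * ρ t)) / (t * ρ t ^ (-γ))) atTop
      (𝓝 (c ^ (-γ) * (∫ r, r ^ γ ∂FR) / γ)) := by
  have hpos : ∀ᵐ r ∂FR, r ∉ Iic (0:ℝ) := measure_eq_zero_iff_ae_notMem.1 hFR
  have h1 : 0 < γ - 1 := by linarith
  have h0 : 0 < γ := by linarith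
  have e : c ^ (-γ) * (∫ r, r ^ γ ∂FR) / γ = ∫ r, (c ^ (-γ) / γ) * r ^ γ ∂FR := by
    rw [integral_const_mul]; ring
  have e2 : (fun t => (muEllR γ t FR).real (Ici (c * ρ t)) / (t * ρ t ^ (-γ))) =
      fun t => ∫ r, gtail γ t (c * ρ t / r) / (t * ρ t ^ (-γ)) ∂FR := by
    funext t
    rw [integral_div, muEllR_real _ _ _ _ hFR hγ1 (mul_pos hc (hρpos t))]
  rw [e, e2]
  refine tendsto_integral_filter_of_dominated_convergence
    (fun r => (c ^ (-γ) / (γ - 1)) * r ^ γ) ?_ ?_ (hmom.const_mul _) ?_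
  · refine Eventually.of_forall fun t => ?_
    exact (((gtail_meas γ t).comp (by fun_prop)).div_const _).aestronglyMeasurable
  · filter_upwards [eventually_gt_atTop 0] with t ht
    filter_upwards [hpos] with r hr
    simp only [mem_Iic, not_le] at hr
    have hρ := hρpos t
    have hy : 0 < c * ρ t / r := by positivity
    rw [Real.norm_of_nonneg (div_nonneg (gtail_nonneg _ _ _ hγ1 hy) (by positivity)),
      div_le_iff₀ (by positivity)]
    refine (gtail_le _ _ _ hγ1 hy ht).trans (le_of_eq ?_)
    rw [Real.div_rpow (by positivity) hr.le, Real.mul_rpow hc.le hρ.le, Real.rpow_neg hr.le γ]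
    field_simp
  · filter_upwards [hpos] with r hr
    simp only [mem_Iic, not_le] at hr
    have hz : Tendsto (fun t => c / r * (ρ t / t)) atTop (𝓝 0) := by
      simpa using hρupp.const_mul (c / r)
    have hz2 : Tendsto (fun t => (c ^ (-γ) * r ^ γ) * ((c / r * (ρ t / t)) / (γ * (γ - 1)) + (1 - (c / r * (ρ t / t))) / γ)) atTop
        (𝓝 ((c ^ (-γ) * r ^ γ) * (0 / (γ * (γ - 1)) + (1 - 0) / γ))) :=
      (((hz.div_const _).add ((hz.const_sub 1).div_const _)).const_mul _)
    have e3 : (c ^ (-γ) * r ^ γ) * (0 / (γ * (γ - 1)) + (1 - 0) / γ) = c ^ (-γ) / γ * r ^ γ := by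
      ring
    rw [e3] at hz2
    refine hz2.congr' ?_
    filter_upwards [eventually_gt_atTop 0, hz.eventually (eventually_lt_nhds zero_lt_one)] with t ht hlt
    have hρ := hρpos t
    have hle : c * ρ t / r ≤ t := by
      have : c / r * (ρ t / t) = (c * ρ t / r) / t := by ring
      rw [this, div_lt_one ht] at hlt
      exact hlt.le
    rw [gtail, if_pos hle, Real.div_rpow (by positivity) hr.le, Real.mul_rpow hc.le hρ.le, Real.rpow_neg hr.le γ]
    have := Real.rpow_pos_of_pos hρ (-γ)
    field_simp

lemma layer2 (γ K a : ℝ) (hγ1 : 1 < γ) (hγ2 : γ < 2) (hK : 0 ≤ K) (ha : 0 < a) (M : Measure ℝ)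
    (hM : ∀ y > 0, M (Ici y) ≤ ENNReal.ofReal (K * y ^ (-γ))) :
    IntegrableOn (fun v => v ^ 2) (Ioo 0 a) M ∧
    ∫ v in Ioo 0 a, v ^ 2 ∂M ≤ 2 * K / (2 - γ) * a ^ (2 - γ) := by
  have h2 : 0 < 2 - γ := by linarith
  have key : ∫⁻ v in Ioo 0 a, ENNReal.ofReal (v ^ 2) ∂M ≤ ENNReal.ofReal (2 * K / (2 - γ) * a ^ (2 - γ)) := by
    have h := lintegral_rpow_eq_lintegral_meas_le_mul (M.restrict (Ioo 0 a)) (f := fun v => v)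
      (by filter_upwards [ae_restrict_mem measurableSet_Ioo] with x hx using hx.1.le) (by fun_prop)
      (p := 2) (by norm_num)
    simp only [Real.rpow_ofNat] at h
    rw [h]
    have hb : ∫⁻ t in Ioi 0, (M.restrict (Ioo 0 a)) {v | t ≤ v} * ENNReal.ofReal (t ^ ((2:ℝ) - 1)) ≤
        ∫⁻ t in Ioc 0 a, ENNReal.ofReal (K * t ^ (1 - γ)) := by
      rw [← lintegral_indicator measurableSet_Ioi, ← lintegral_indicator measurableSet_Ioc]
      refine lintegral_mono fun t => ?_
      by_cases ht : 0 < t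
      · rw [indicator_of_mem (by exact ht)]
        by_cases hta : t ≤ a
        · rw [indicator_of_mem (by exact ⟨ht, hta⟩)]
          calc _ ≤ M (Ici t) * ENNReal.ofReal (t ^ ((2:ℝ) - 1)) := by
                gcongr
                · exact Measure.restrict_le_self
                · exact le_rfl
            _ ≤ ENNReal.ofReal (K * t ^ (-γ)) * ENNReal.ofReal (t ^ ((2:ℝ) - 1)) := by
                gcongr; exact hM t ht
            _ = _ := by
                rw [← ENNReal.ofReal_mul (by positivity), mul_assoc, ← Real.rpow_add ht]
                congr 3; ring
        · have : (M.restrict (Ioo 0 a)) {v | t ≤ v} = 0 := by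
            rw [Measure.restrict_apply (by exact measurableSet_Ici)]
            have : {v | t ≤ v} ∩ Ioo 0 a = ∅ := by
              ext v; simp only [mem_inter_iff, mem_ofPred_eq, mem_Ioo, mem_empty_iff_false, iff_false]
              rintro ⟨h1, h2, h3⟩; linarith
            rw [this, measure_empty]
          simp [this]
      · rw [indicator_of_notMem (by exact ht)]; exact zero_le
    refine (mul_le_mul_right hb _).trans (le_of_eq ?_)
    rw [← ofReal_integral_eq_lintegral_ofReal, ← intervalIntegral.integral_of_le ha.le,
      intervalIntegral.integral_const_mul, integral_rpow (Or.inl (by linarith)), ← ENNReal.ofReal_mul (by norm_num)]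
    · congr 1
      rw [show 1 - γ + 1 = 2 - γ by ring, Real.zero_rpow h2.ne']
      ring
    · have := (intervalIntegral.intervalIntegrable_rpow' (a := 0) (b := a) (r := 1 - γ) (by linarith)).const_mul K
      rwa [intervalIntegrable_iff_integrableOn_Ioc_of_le ha.le] at this
    · filter_upwards [ae_restrict_mem measurableSet_Ioc] with x hx
      have := hx.1
      simp only [Pi.zero_apply]; positivity
  constructor
  · refine ⟨by fun_prop, ?_⟩
    rw [hasFiniteIntegral_iff_ofReal (Eventually.of_forall fun v => by simp only [Pi.zero_apply]; positivity)]
    exact key.trans_lt ENNReal.ofReal_lt_top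
  · rw [integral_eq_lintegral_of_nonneg_ae (Eventually.of_forall fun v => by simp only [Pi.zero_apply]; positivity) (by fun_prop)]
    exact ENNReal.toReal_le_of_le_ofReal (by positivity) key

lemma layer1 (γ K a : ℝ) (hγ1 : 1 < γ) (hK : 0 ≤ K) (ha : 0 < a) (M : Measure ℝ)
    (hM : ∀ y > 0, M (Ici y) ≤ ENNReal.ofReal (K * y ^ (-γ))) :
    IntegrableOn (fun v => v) (Ici a) M ∧
    ∫ v in Ici a, v ∂M ≤ (K + K / (γ - 1)) * a ^ (1 - γ) := by
  have h2 : 0 < γ - 1 := by linarith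
  have hnn : 0 ≤ᵐ[M.restrict (Ici a)] fun v => v := by
    filter_upwards [ae_restrict_mem measurableSet_Ici] with x hx using ha.le.trans hx
  have key : ∫⁻ v in Ici a, ENNReal.ofReal v ∂M ≤ ENNReal.ofReal ((K + K / (γ - 1)) * a ^ (1 - γ)) := by
    have h := lintegral_rpow_eq_lintegral_meas_le_mul (M.restrict (Ici a)) (f := fun v => v)
      hnn (by fun_prop) (p := 1) (by norm_num)
    simp only [Real.rpow_one, sub_self, Real.rpow_zero, ENNReal.ofReal_one, mul_one, one_mul] at h
    rw [h, ← Ioc_union_Ioi_eq_Ioi ha.le, lintegral_union measurableSet_Ioi (Ioc_disjoint_Ioi le_rfl)]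
    have hb1 : ∫⁻ t in Ioc 0 a, (M.restrict (Ici a)) {v | t ≤ v} ≤ ENNReal.ofReal (K * a ^ (1 - γ)) := by
      calc _ ≤ ∫⁻ t in Ioc 0 a, ENNReal.ofReal (K * a ^ (-γ)) := by
            refine lintegral_mono fun t => ?_
            refine (measure_mono (subset_univ _)).trans ?_
            rw [Measure.restrict_apply_univ]
            exact hM a ha
        _ = _ := by
          rw [setLIntegral_const, Real.volume_Ioc, ← ENNReal.ofReal_mul (by positivity), sub_zero, mul_assoc,
            ← Real.rpow_add_one ha.ne']
          congr 3; ring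
    have hb2 : ∫⁻ t in Ioi a, (M.restrict (Ici a)) {v | t ≤ v} ≤ ENNReal.ofReal (K / (γ - 1) * a ^ (1 - γ)) := by
      calc _ ≤ ∫⁻ t in Ioi a, ENNReal.ofReal K * ENNReal.ofReal (t ^ (-γ)) := by
            refine setLIntegral_mono' measurableSet_Ioi fun t ht => ?_
            refine (Measure.restrict_apply_le _ _).trans ?_
            rw [← ENNReal.ofReal_mul hK]
            exact hM t (ha.trans ht)
        _ = _ := by
          rw [lintegral_const_mul' _ _ (by finiteness), lint_Ioi_rpow _ _ (by linarith) ha, ← ENNReal.ofReal_mul hK]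
          congr 1
          rw [show -γ + 1 = -(γ - 1) by ring, neg_div_neg_eq, show 1 - γ = -(γ-1) by ring]
          ring
    refine (add_le_add hb1 hb2).trans (le_of_eq ?_)
    rw [← ENNReal.ofReal_add (by positivity) (by positivity)]
    congr 1; ring
  constructor
  · refine ⟨by fun_prop, ?_⟩
    rw [hasFiniteIntegral_iff_ofReal hnn]
    exact key.trans_lt ENNReal.ofReal_lt_top
  · rw [integral_eq_lintegral_of_nonneg_ae hnn (by fun_prop)]
    exact ENNReal.toReal_le_of_le_ofReal (by positivity) key

theorem per_t (γ Q : ℝ) (hγ1 : 1 < γ) (hγ2 : γ < 2) (hQ : 0 < Q)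
    (FR : Measure ℝ) [IsProbabilityMeasure FR] (hFRpos : FR (Set.Iic 0) = 0)
    (hmom : Integrable (fun r => r ^ γ) FR)
    (π₀ : Measure ℝ) [IsProbabilityMeasure π₀] (t : ℝ) (ht : 0 < t)
    (hπ : ∀ θ : ℝ, charFun π₀ θ = Complex.exp (Q * ∫ v, kerE θ v ∂(muEllR γ t FR)))
    (ρ : ℝ) (hρ : 0 < ρ) (ε δ k : ℝ) (hε : 0 < ε) (hδ : 0 < δ) (hεδ : ε ≤ 1 - 2 * δ)
    (hk : k = Q * (∫ r, r ^ γ ∂FR) / (γ - 1)) :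
    0 ≤ k ∧
    (π₀.real (Ici ρ) / (t * ρ ^ (-γ)) ≤
      Q * ((muEllR γ t FR).real (Ici ((1 - 2 * δ) * ρ)) / (t * ρ ^ (-γ))) +
        (k * ε ^ (-γ)) ^ 2 * (t * ρ ^ (-γ)) + 32 * (2 * k / (2 - γ) * ε ^ (2 - γ) / δ ^ 2)) ∧
    ((k + k / (γ - 1)) * ε ^ (1 - γ) * (t * ρ ^ (-γ)) ≤ δ →
      32 * (2 * k / (2 - γ) * ε ^ (2 - γ) / δ ^ 2) * (t * ρ ^ (-γ)) ≤ 1 →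
      Real.exp (-(k * ε ^ (-γ) * (t * ρ ^ (-γ)))) *
        (Q * ((muEllR γ t FR).real (Ici ((1 + 2 * δ) * ρ)) / (t * ρ ^ (-γ)))) *
        (1 - 32 * (2 * k / (2 - γ) * ε ^ (2 - γ) / δ ^ 2) * (t * ρ ^ (-γ))) ≤
      π₀.real (Ici ρ) / (t * ρ ^ (-γ))) := by
  have h1 : 0 < γ - 1 := by linarith
  have h2 : 0 < 2 - γ := by linarith
  have hE : 0 ≤ ∫ r, r ^ γ ∂FR := by
    have hpos : ∀ᵐ r ∂FR, r ∉ Iic (0:ℝ) := measure_eq_zero_iff_ae_notMem.1 hFRpos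
    refine integral_nonneg_of_ae ?_
    filter_upwards [hpos] with r hr
    simp only [mem_Iic, not_le] at hr
    simp only [Pi.zero_apply]; positivity
  have hk0 : 0 ≤ k := by rw [hk]; positivity
  refine ⟨hk0, ?_⟩
  set f := t * ρ ^ (-γ) with hf
  have hf0 : 0 < f := by positivity
  set M := muEllR γ t FR with hMdef
  set ν : Measure ℝ := ENNReal.ofReal Q • M with hν
  have hνr : ∀ A, ν.real A = Q * M.real A := by
    intro A
    rw [hν, measureReal_ennreal_smul_apply, ENNReal.toReal_ofReal hQ.le]
  have h0 : ν (Iic 0) = 0 := by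
    rw [hν, Measure.smul_apply, hMdef, muEllR, Measure.restrict_apply measurableSet_Iic,
      show Iic (0:ℝ) ∩ Ioi 0 = ∅ by ext x; simp, measure_empty]
    simp
  have hb : ∀ y > 0, ν (Ici y) ≤ ENNReal.ofReal ((k * t) * y ^ (-γ)) := by
    intro y hy
    rw [hν, Measure.smul_apply, smul_eq_mul]
    refine (mul_le_mul_right (muEllR_bound γ t y FR hFRpos hmom hγ1 hy ht) _).trans (le_of_eq ?_)
    rw [← ENNReal.ofReal_mul hQ.le, hk]
    congr 1; ring
  have ha : 0 < ε * ρ := by positivity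
  have hkt : 0 ≤ k * t := by positivity
  obtain ⟨i2, b2⟩ := layer2 γ (k * t) (ε * ρ) hγ1 hγ2 hkt ha ν hb
  obtain ⟨i1, b1⟩ := layer1 γ (k * t) (ε * ρ) hγ1 hkt ha ν hb
  have hπ' : ∀ θ, charFun π₀ θ = Complex.exp (∫ v, kerE θ v ∂ν) := by
    intro θ
    rw [hπ, hν, integral_smul_measure, ENNReal.toReal_ofReal hQ.le, Complex.real_smul]
  have hd : 0 < δ * ρ := by positivity
  obtain ⟨hU, hL⟩ := abs_bounds ν (ε * ρ) h0 ha i2 i1 π₀ hπ' ρ (δ * ρ) hd (by nlinarith)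
  have bl : ν.real (Ici (ε * ρ)) ≤ k * ε ^ (-γ) * f := by
    have := ENNReal.toReal_le_of_le_ofReal (by positivity) (hb _ ha)
    rw [Real.mul_rpow hε.le hρ.le] at this
    calc _ ≤ _ := this
      _ = _ := by rw [hf]; ring
  have bs : 32 * (∫ v in Ioo 0 (ε * ρ), v ^ 2 ∂ν) / (δ * ρ) ^ 2 ≤
      32 * (2 * k / (2 - γ) * ε ^ (2 - γ) / δ ^ 2) * f := by
    have e : ρ ^ (2 - γ) = ρ ^ (-γ) * ρ ^ 2 := by
      rw [show 2 - γ = -γ + (2:ℕ) by push_cast; ring, Real.rpow_add_natCast hρ.ne']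
    rw [Real.mul_rpow hε.le hρ.le, e] at b2
    rw [div_le_iff₀ (by positivity)]
    calc _ ≤ _ := mul_le_mul_of_nonneg_left b2 (by norm_num)
      _ = _ := by rw [hf]; field_simp
  have bm : ∫ v in Ici (ε * ρ), v ∂ν ≤ (k + k / (γ - 1)) * ε ^ (1 - γ) * f * ρ := by
    have e : ρ ^ (1 - γ) = ρ ^ (-γ) * ρ := by
      rw [show 1 - γ = -γ + 1 by ring, Real.rpow_add_one hρ.ne']
    rw [Real.mul_rpow hε.le hρ.le, e] at b1
    calc _ ≤ _ := b1
      _ = _ := by rw [hf]; ring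
  set s := 32 * (2 * k / (2 - γ) * ε ^ (2 - γ) / δ ^ 2) with hs
  set σ := 32 * (∫ v in Ioo 0 (ε * ρ), v ^ 2 ∂ν) / (δ * ρ) ^ 2 with hσ
  set l := ν.real (Ici (ε * ρ)) with hl
  have hl0 : 0 ≤ l := measureReal_nonneg
  constructor
  · rw [div_le_iff₀ hf0]
    have e : ρ - 2 * (δ * ρ) = (1 - 2 * δ) * ρ := by ring
    rw [e, hνr] at hU
    have e3 : (Q * (M.real (Ici ((1 - 2 * δ) * ρ)) / f) + (k * ε ^ (-γ)) ^ 2 * f + s) * f =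
        Q * M.real (Ici ((1 - 2 * δ) * ρ)) + (k * ε ^ (-γ) * f) ^ 2 + s * f := by
      field_simp
    rw [e3]
    have : l ^ 2 ≤ (k * ε ^ (-γ) * f) ^ 2 := by gcongr
    linarith
  · intro hm hs1
    rw [le_div_iff₀ hf0]
    refine le_trans ?_ hL
    have hfin : ν (Ici (ρ + δ * ρ + ∫ v in Ici (ε * ρ), v ∂ν)) ≠ ∞ := by
      have hm0 : 0 ≤ ∫ v in Ici (ε * ρ), v ∂ν :=
        setIntegral_nonneg measurableSet_Ici fun v hv => ha.le.trans hv
      exact ne_top_of_le_ne_top ENNReal.ofReal_ne_top (hb _ (by positivity))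
    have hmono : ν.real (Ici ((1 + 2 * δ) * ρ)) ≤ ν.real (Ici (ρ + δ * ρ + ∫ v in Ici (ε * ρ), v ∂ν)) := by
      refine measureReal_mono (Ici_subset_Ici.2 ?_) hfin
      have := mul_le_mul_of_nonneg_right hm hρ.le
      linarith
    rw [hνr ] at hmono
    calc _ = Real.exp (-(k * ε ^ (-γ) * f)) * (Q * M.real (Ici ((1 + 2 * δ) * ρ))) * (1 - s * f) := by
          field_simp
      _ ≤ Real.exp (-l) * ν.real (Ici (ρ + δ * ρ + ∫ v in Ici (ε * ρ), v ∂ν)) * (1 - s * f) := by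
          have : 0 ≤ 1 - s * f := by linarith
          gcongr
      _ ≤ _ := by gcongr

theorem main_lim (γ Q : ℝ) (hγ1 : 1 < γ) (hγ2 : γ < 2) (hQ : 0 < Q)
    (FR : Measure ℝ) [IsProbabilityMeasure FR] (hFRpos : FR (Set.Iic 0) = 0)
    (hmom : Integrable (fun r => r ^ γ) FR)
    (π : ℝ → Measure ℝ) [∀ t, IsProbabilityMeasure (π t)]
    (hπ : ∀ t, 0 < t → ∀ θ : ℝ, charFun (π t) θ = Complex.exp (Q * ∫ v, kerE θ v ∂(muEllR γ t FR)))
    (ρ : ℝ → ℝ) (hρpos : ∀ t, 0 < ρ t)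
    (hρlow : Tendsto (fun t => ρ t / t ^ (1 / γ)) atTop atTop)
    (hρupp : Tendsto (fun t => ρ t / t) atTop (𝓝 0)) :
    Tendsto (fun t => (π t).real (Ici (ρ t)) / (t * ρ t ^ (-γ)))
      atTop (𝓝 (Q * (∫ r, r ^ γ ∂FR) / γ)) := by
  have h1 : 0 < γ - 1 := by linarith
  have h2 : 0 < 2 - γ := by linarith
  have hγ0 : 0 < γ := by linarith
  set E := ∫ r, r ^ γ ∂FR with hE
  have hf : Tendsto (fun t => t * ρ t ^ (-γ)) atTop (𝓝 0) := by
    have := ((tendsto_rpow_atTop hγ0).comp hρlow).inv_tendsto_atTop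
    refine this.congr' ?_
    filter_upwards [eventually_gt_atTop 0] with t ht
    have hρ := hρpos t
    simp only [Pi.inv_apply, Function.comp]
    rw [Real.div_rpow hρ.le (by positivity), ← Real.rpow_mul ht.le, one_div_mul_cancel hγ0.ne',
      Real.rpow_one, inv_div, Real.rpow_neg hρ.le, div_eq_mul_inv]
  have hM := fun c hc => muEllR_lim γ FR hFRpos hmom hγ1 ρ hρpos hρupp c hc
  obtain ⟨k, hk⟩ : ∃ k, k = Q * E / (γ - 1) := ⟨_, rfl⟩
  have hcont : ∀ σ : ℝ, Tendsto (fun δ : ℝ => Q * ((1 + σ * δ) ^ (-γ) * E / γ)) (𝓝[>] 0) (𝓝 (Q * E / γ)) := by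
    intro σ
    have : ContinuousAt (fun δ : ℝ => Q * ((1 + σ * δ) ^ (-γ) * E / γ)) 0 := by
      have : ContinuousAt (fun δ : ℝ => (1 + σ * δ) ^ (-γ)) 0 :=
        ContinuousAt.rpow_const (by fun_prop) (Or.inl (by simp))
      fun_prop
    have h := this.tendsto.mono_left (nhdsWithin_le_nhds (s := Ioi 0))
    simpa [mul_div_assoc] using h
  rw [tendsto_order]
  constructor
  · intro b hbD
    obtain ⟨δ, hδb, hδ0, hδ4⟩ := (((hcont 2).eventually (eventually_gt_nhds hbD)).and
      (Ioo_mem_nhdsGT (show (0:ℝ) < 1/4 by norm_num))).exists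
    obtain ⟨ε, hε⟩ : ∃ ε : ℝ, ε = 1 / 4 := ⟨_, rfl⟩
    have e1 : Tendsto (fun t => (k + k / (γ - 1)) * ε ^ (1 - γ) * (t * ρ t ^ (-γ))) atTop (𝓝 0) := by
      simpa using hf.const_mul ((k + k / (γ - 1)) * ε ^ (1 - γ))
    have e2 : Tendsto (fun t => 32 * (2 * k / (2 - γ) * ε ^ (2 - γ) / δ ^ 2) * (t * ρ t ^ (-γ))) atTop (𝓝 0) := by
      simpa using hf.const_mul (32 * (2 * k / (2 - γ) * ε ^ (2 - γ) / δ ^ 2))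
    have e3 : Tendsto (fun t => Real.exp (-(k * ε ^ (-γ) * (t * ρ t ^ (-γ))))) atTop (𝓝 1) := by
      have := (Real.continuous_exp.tendsto _).comp (hf.const_mul (k * ε ^ (-γ))).neg
      simpa [Function.comp_def] using this
    have e4 := (e3.mul ((hM (1 + 2 * δ) (by positivity)).const_mul Q)).mul (e2.const_sub 1)
    rw [one_mul, sub_zero, mul_one] at e4
    filter_upwards [eventually_gt_atTop 0, e4.eventually (eventually_gt_nhds hδb),
      e1.eventually (eventually_le_nhds hδ0), e2.eventually (eventually_le_nhds zero_lt_one)]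
      with t ht c1 c2 c3
    have := (per_t γ Q hγ1 hγ2 hQ FR hFRpos hmom (π t) t ht (hπ t ht) (ρ t) (hρpos t) ε δ k
      (by rw [hε]; norm_num) hδ0 (by linarith) hk).2.2 c2 c3
    exact c1.trans_le this
  · intro b hbD
    obtain ⟨δ, hδb, hδ0, hδ4⟩ := (((hcont (-2)).eventually (eventually_lt_nhds hbD)).and
      (Ioo_mem_nhdsGT (show (0:ℝ) < 1/4 by norm_num))).exists
    rw [show 1 + -2 * δ = 1 - 2 * δ by ring] at hδb
    have hεt : Tendsto (fun ε : ℝ => Q * ((1 - 2 * δ) ^ (-γ) * E / γ) + 32 * (2 * k / (2 - γ) * ε ^ (2 - γ) / δ ^ 2)) (𝓝[>] 0)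
        (𝓝 (Q * ((1 - 2 * δ) ^ (-γ) * E / γ))) := by
      have : ContinuousAt (fun ε : ℝ => Q * ((1 - 2 * δ) ^ (-γ) * E / γ) + 32 * (2 * k / (2 - γ) * ε ^ (2 - γ) / δ ^ 2)) 0 := by
        have : ContinuousAt (fun ε : ℝ => ε ^ (2 - γ)) 0 :=
          ContinuousAt.rpow_const (by fun_prop) (Or.inr h2.le)
        fun_prop
      have h := this.tendsto.mono_left (nhdsWithin_le_nhds (s := Ioi 0))
      simpa [Real.zero_rpow h2.ne'] using h
    obtain ⟨ε, hεb, hε0, hε4⟩ := ((hεt.eventually (eventually_lt_nhds hδb)).and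
      (Ioo_mem_nhdsGT (show (0:ℝ) < 1/4 by norm_num))).exists
    have e4 := (((hM (1 - 2 * δ) (by linarith)).const_mul Q).add
      (hf.const_mul ((k * ε ^ (-γ)) ^ 2))).add_const (32 * (2 * k / (2 - γ) * ε ^ (2 - γ) / δ ^ 2))
    rw [mul_zero, add_zero] at e4
    filter_upwards [eventually_gt_atTop 0, e4.eventually (eventually_lt_nhds hεb)] with t ht c1
    have := (per_t γ Q hγ1 hγ2 hQ FR hFRpos hmom (π t) t ht (hπ t ht) (ρ t) (hρpos t) ε δ k
      hε0 hδ0 (by linarith) hk).2.1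
    exact this.trans_lt c1

/-- Moderate large deviations: if `t^{1/γ} ≪ ρ(t) ≪ t`, then
`P(Y_t ≥ ρ(t)) = (Q E[R^γ]/γ) · t · ρ(t)^{-γ} · (1 + o(1))` as `t → ∞`. -/
theorem stmt_1 (γ Q : ℝ) (hγ1 : 1 < γ) (hγ2 : γ < 2) (hQ : 0 < Q)
    (FR : Measure ℝ) [IsProbabilityMeasure FR] (hFRpos : FR (Set.Iic 0) = 0)
    (hmom : Integrable (fun r => r ^ γ) FR)
    (Ω : Type*) [MeasurableSpace Ω] (P : Measure Ω) [IsProbabilityMeasure P]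
    (Y : ℝ → Ω → ℝ) (hYmeas : ∀ t, Measurable (Y t))
    (hYchar : ∀ t : ℝ, 0 < t → ∀ θ : ℝ,
      ∫ ω, Complex.exp (θ * Y t ω * Complex.I) ∂P
        = Complex.exp (Q * ∫ v, (Complex.exp (θ * v * Complex.I) - 1 - θ * v * Complex.I)
            ∂(muEllR γ t FR)))
    (ρ : ℝ → ℝ) (hρpos : ∀ t, 0 < ρ t)
    (hρlow : Tendsto (fun t => ρ t / t ^ (1 / γ)) atTop atTop)
    (hρupp : Tendsto (fun t => ρ t / t) atTop (𝓝 0)) :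
    Tendsto (fun t => (P {ω | ρ t ≤ Y t ω}).toReal / (t * ρ t ^ (-γ)))
      atTop (𝓝 (Q * (∫ r, r ^ γ ∂FR) / γ)) := by
  have hπp : ∀ t, IsProbabilityMeasure (P.map (Y t)) := fun t =>
    Measure.isProbabilityMeasure_map (hYmeas t).aemeasurable
  have h := main_lim γ Q hγ1 hγ2 hQ FR hFRpos hmom (fun t => P.map (Y t)) (fun t ht θ => by
    rw [charFun_apply_real, integral_map (hYmeas t).aemeasurable (by fun_prop)]
    exact hYchar t ht θ) ρ hρpos hρlow hρupp
  refine h.congr fun t => ?_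
  rw [measureReal_def, Measure.map_apply (hYmeas t) measurableSet_Ici]
  rfl
end
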